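/- arXiv:2309.05233 — 5 statements merged into one kernel-verified Lean document; each statement's English description precedes it below -/
import Mathlib

section
/- There exists an absolute constant C such that for all a > 0, x > 0, every φ as in the context, and every real r ∈ [−1, 1], one has |φ̃(1 + 2ir)| = |∫_0^∞ J_{2ir}(u) φ(u) du/u| ≤ C. -/
open Real MeasureTheory

/-- The J-Bessel function of complex order `ν` at real argument `u`, defined by the series
`J_ν(u) = Σ_{j=0}^∞ ((−1)^j / (j! · Γ(j+1+ν))) · (u/2)^{2j+ν}`, where
`(u/2)^ν := exp(ν · log(u/2))` with the real logarithm. -/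
noncomputable def besselJ (ν : ℂ) (u : ℝ) : ℂ :=
  ∑' j : ℕ, ((-1 : ℂ) ^ j / ((Nat.factorial j : ℂ) * Complex.Gamma ((j : ℂ) + 1 + ν))) *
    Complex.exp ((2 * (j : ℂ) + ν) * (Real.log (u / 2) : ℂ))

lemma gamma_half_aux (j : ℕ) :
    Complex.Gamma ((j : ℂ) + 1 / 2) * (4 ^ j * (Nat.factorial j : ℂ)) =
      (Nat.factorial (2 * j) : ℂ) * Complex.Gamma (1 / 2) := by
  induction j with
  | zero => simp
  | succ n ih =>
    have h0 : (n : ℂ) + 1 / 2 ≠ 0 := by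
      intro h
      have := congrArg Complex.re h
      simp at this
      have h2 : (0 : ℝ) ≤ n := Nat.cast_nonneg n
      linarith
    have e : ((n + 1 : ℕ) : ℂ) + 1 / 2 = ((n : ℂ) + 1 / 2) + 1 := by push_cast; ring
    rw [e, Complex.Gamma_add_one _ h0, show 2 * (n + 1) = 2 * n + 1 + 1 by ring,
      Nat.factorial_succ (2 * n + 1), Nat.factorial_succ (2 * n), Nat.factorial_succ n]
    push_cast
    linear_combination (2 * (2 * (n : ℂ) + 1) * (n + 1)) * ih

lemma norm_kernel (ν : ℂ) (hν : ν.re = 0) (s : ℝ) (hs : s ∈ Set.Ioc (0 : ℝ) 1) :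
    ‖(s : ℂ) ^ ((1 / 2 : ℂ) - 1) * (1 - (s : ℂ)) ^ ((ν + 1 / 2) - 1)‖ =
    ‖(s : ℂ) ^ ((1 / 2 : ℂ) - 1) * (1 - (s : ℂ)) ^ ((1 / 2 : ℂ) - 1)‖ := by
  rw [norm_mul, norm_mul]
  congr 1
  rcases hs.2.lt_or_eq with h | h
  · have e : (1 - (s : ℂ)) = ((1 - s : ℝ) : ℂ) := by push_cast; ring
    rw [e, Complex.norm_cpow_eq_rpow_re_of_pos (by linarith),
      Complex.norm_cpow_eq_rpow_re_of_pos (by linarith)]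
    congr 1
    simp [hν]
  · subst h
    have h1 : ν + 1 / 2 - 1 ≠ 0 := by
      intro h
      have := congrArg Complex.re h
      simp [hν] at this
      norm_num at this
    have h2 : (1 / 2 : ℂ) - 1 ≠ 0 := by norm_num
    simp only [Complex.ofReal_one, sub_self]
    rw [Complex.zero_cpow h1, Complex.zero_cpow h2]

lemma bessel_bound (ν : ℂ) (hν : ν.re = 0) (u : ℝ) (hu : 0 < u) :
    ‖besselJ ν u‖ ≤ ‖(Complex.Gamma (ν + 1 / 2))⁻¹‖ * (‖(Complex.Gamma (1 / 2))⁻¹‖ *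
      ∫ s in (0 : ℝ)..1,
        ‖(s : ℂ) ^ ((1 / 2 : ℂ) - 1) * (1 - (s : ℂ)) ^ ((1 / 2 : ℂ) - 1)‖) := by
  have hν2 : 0 < (ν + 1 / 2).re := by simp [hν]
  have hhalf : 0 < (1 / 2 : ℂ).re := by simp
  have hj : ∀ j : ℕ, 0 < ((j : ℂ) + 1 / 2).re := by
    intro j
    have h2 : (0 : ℝ) ≤ j := Nat.cast_nonneg j
    simp
    linarith
  set G : ℝ → ℝ := fun s =>
    ‖(s : ℂ) ^ ((1 / 2 : ℂ) - 1) * (1 - (s : ℂ)) ^ ((1 / 2 : ℂ) - 1)‖ with hG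
  have hGint : IntervalIntegrable G volume 0 1 :=
    (Complex.betaIntegral_convergent hhalf hhalf).norm
  set F : ℕ → ℝ → ℂ := fun j s => (((-1) ^ j * u ^ (2 * j) / (Nat.factorial (2 * j)) : ℝ) : ℂ) *
    ((s : ℂ) ^ (((j : ℂ) + 1 / 2) - 1) * (1 - (s : ℂ)) ^ ((ν + 1 / 2) - 1)) with hF
  set f : ℝ → ℂ := fun s => ((Real.cos (u * √s) : ℝ) : ℂ) *
    ((s : ℂ) ^ ((1 / 2 : ℂ) - 1) * (1 - (s : ℂ)) ^ ((ν + 1 / 2) - 1)) with hf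
  have hFint : ∀ j, ∫ s in (0 : ℝ)..1, F j s =
      (((-1) ^ j * u ^ (2 * j) / (Nat.factorial (2 * j)) : ℝ) : ℂ) *
        Complex.betaIntegral ((j : ℂ) + 1 / 2) (ν + 1 / 2) := by
    intro j
    simp only [hF, Complex.betaIntegral]
    exact intervalIntegral.integral_const_mul _ _
  have hFs : ∀ j (s : ℝ), s ∈ Set.Ioc (0 : ℝ) 1 → F j s =
      (((-1) ^ j * (u * √s) ^ (2 * j) / (Nat.factorial (2 * j)) : ℝ) : ℂ) *
      ((s : ℂ) ^ ((1 / 2 : ℂ) - 1) * (1 - (s : ℂ)) ^ ((ν + 1 / 2) - 1)) := by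
    intro j s hs
    have hs0 : (s : ℂ) ≠ 0 := by exact_mod_cast hs.1.ne'
    have e1 : (s : ℂ) ^ (((j : ℂ) + 1 / 2) - 1) = (s : ℂ) ^ j * (s : ℂ) ^ ((1 / 2 : ℂ) - 1) := by
      rw [add_sub_assoc, Complex.cpow_add _ _ hs0, Complex.cpow_natCast]
    have e2 : (u * √s) ^ (2 * j) = u ^ (2 * j) * s ^ j := by
      rw [mul_pow, pow_mul (√s), Real.sq_sqrt hs.1.le]
    simp only [hF]
    rw [e1, e2]
    push_cast
    ring
  have hsum : HasSum (fun j => ∫ s in (0 : ℝ)..1, F j s) (∫ s in (0 : ℝ)..1, f s) := by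
    refine intervalIntegral.hasSum_integral_of_dominated_convergence
      (fun j s => u ^ (2 * j) / (Nat.factorial (2 * j)) * G s) ?_ ?_ ?_ ?_ ?_
    · intro j
      have := ((Complex.betaIntegral_convergent (hj j) hν2).const_mul
        (((-1) ^ j * u ^ (2 * j) / (Nat.factorial (2 * j)) : ℝ) : ℂ))
      exact this.def'.aestronglyMeasurable
    · intro j
      refine Filter.Eventually.of_forall fun s hs => ?_
      rw [Set.uIoc_of_le zero_le_one] at hs
      rw [hFs j s hs, norm_mul, norm_kernel ν hν s hs]
      refine mul_le_mul_of_nonneg_right ?_ (norm_nonneg _)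
      rw [Complex.norm_real, norm_div, norm_mul, norm_pow, norm_neg, norm_one, one_pow, one_mul,
        Real.norm_natCast, Real.norm_of_nonneg (by positivity)]
      have h1 : √s ≤ 1 := Real.sqrt_le_one.mpr hs.2
      have : u * √s ≤ u := by nlinarith
      gcongr
    · refine Filter.Eventually.of_forall fun s hs => ?_
      exact (Real.hasSum_cosh u).summable.mul_right _
    · simp only [tsum_mul_right]
      exact hGint.const_mul _
    · refine Filter.Eventually.of_forall fun s hs => ?_
      rw [Set.uIoc_of_le zero_le_one] at hs
      simp only [hFs _ s hs]
      exact ((Complex.hasSum_ofReal).mpr (Real.hasSum_cos (u * √s))).mul_right _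
  have hterm : ∀ j : ℕ, ((-1 : ℂ) ^ j / ((Nat.factorial j : ℂ) *
      Complex.Gamma ((j : ℂ) + 1 + ν))) *
      Complex.exp ((2 * (j : ℂ) + ν) * (Real.log (u / 2) : ℂ)) =
      (Complex.exp (ν * (Real.log (u / 2) : ℂ)) * (Complex.Gamma (ν + 1 / 2))⁻¹ *
        (Complex.Gamma (1 / 2))⁻¹) * ∫ s in (0 : ℝ)..1, F j s := by
    intro j
    have hb := Complex.Gamma_mul_Gamma_eq_betaIntegral (hj j) hν2
    rw [show (j : ℂ) + 1 / 2 + (ν + 1 / 2) = (j : ℂ) + 1 + ν by ring] at hb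
    have hg := gamma_half_aux j
    have n1 : Complex.Gamma ((j : ℂ) + 1 + ν) ≠ 0 := by
      apply Complex.Gamma_ne_zero_of_re_pos
      have h2 : (0 : ℝ) ≤ j := Nat.cast_nonneg j
      simp [hν]
      linarith
    have n2 := Complex.Gamma_ne_zero_of_re_pos hν2
    have n3 := Complex.Gamma_ne_zero_of_re_pos hhalf
    have n4 : (Nat.factorial j : ℂ) ≠ 0 := by exact_mod_cast Nat.factorial_ne_zero j
    have n5 : (Nat.factorial (2 * j) : ℂ) ≠ 0 := by
      exact_mod_cast Nat.factorial_ne_zero (2 * j)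
    have he : Complex.exp ((2 * (j : ℂ) + ν) * (Real.log (u / 2) : ℂ)) =
        ((u : ℂ) ^ (2 * j) / 4 ^ j) * Complex.exp (ν * (Real.log (u / 2) : ℂ)) := by
      rw [add_mul, Complex.exp_add]
      congr 1
      rw [show (2 * (j : ℂ) * (Real.log (u / 2) : ℂ)) = ((2 * j : ℕ) : ℂ) * (Real.log (u / 2) : ℂ)
        by push_cast; ring, Complex.exp_nat_mul, ← Complex.ofReal_exp,
        Real.exp_log (by positivity)]
      push_cast
      rw [div_pow, pow_mul 2]
      norm_num
    have hB : Complex.betaIntegral ((j : ℂ) + 1 / 2) (ν + 1 / 2) =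
        Complex.Gamma ((j : ℂ) + 1 / 2) * Complex.Gamma (ν + 1 / 2) /
          Complex.Gamma ((j : ℂ) + 1 + ν) := by
      rw [hb]; field_simp
    have hgj : Complex.Gamma ((j : ℂ) + 1 / 2) =
        (Nat.factorial (2 * j) : ℂ) * Complex.Gamma (1 / 2) / (4 ^ j * (Nat.factorial j : ℂ)) := by
      rw [← hg]; field_simp
    rw [hFint j, he, hB, hgj]
    push_cast
    generalize Complex.Gamma (ν + 1 / 2) = A at *
    generalize Complex.Gamma (1 / 2) = B at *
    generalize Complex.Gamma ((j : ℂ) + 1 + ν) = D at *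
    field_simp
  have hbes : besselJ ν u = (Complex.exp (ν * (Real.log (u / 2) : ℂ)) *
      (Complex.Gamma (ν + 1 / 2))⁻¹ * (Complex.Gamma (1 / 2))⁻¹) * ∫ s in (0 : ℝ)..1, f s := by
    unfold besselJ
    simp only [hterm]
    exact (hsum.mul_left _).tsum_eq
  have hexp : ‖Complex.exp (ν * (Real.log (u / 2) : ℂ))‖ = 1 := by
    rw [Complex.norm_exp]
    simp [hν]
  have hfle : ‖∫ s in (0 : ℝ)..1, f s‖ ≤ ∫ s in (0 : ℝ)..1, G s := by
    refine intervalIntegral.norm_integral_le_of_norm_le zero_le_one ?_ hGint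
    refine Filter.Eventually.of_forall fun s hs => ?_
    simp only [hf]
    rw [norm_mul, norm_kernel ν hν s hs, Complex.norm_real]
    exact mul_le_of_le_one_left (norm_nonneg _) (Real.abs_cos_le_one _)
  rw [hbes, norm_mul, norm_mul, norm_mul, hexp, one_mul, mul_assoc]
  gcongr

theorem stmt1 :
    ∃ C : ℝ, ∀ (a x : ℝ) (φ : ℝ → ℝ) (r : ℝ), 0 < a → 0 < x →
      Measurable φ → (∀ u, 0 ≤ φ u ∧ φ u ≤ 1) →
      (∀ u, u ∉ Set.Icc (3 * a / (8 * x)) (3 * a / (2 * x)) → φ u = 0) →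
      -1 ≤ r → r ≤ 1 →
      ‖∫ u in Set.Ioi (0 : ℝ),
          besselJ (2 * Complex.I * (r : ℂ)) u * (φ u : ℂ) / (u : ℂ)‖ ≤ C := by
  have hcont : Continuous fun r : ℝ => (Complex.Gamma (2 * Complex.I * (r : ℂ) + 1 / 2))⁻¹ :=
    Complex.differentiable_one_div_Gamma.continuous.comp
      (f := fun r : ℝ => 2 * Complex.I * (r : ℂ) + 1 / 2) (by fun_prop)
  obtain ⟨M, hM⟩ := (isCompact_Icc (a := (-1 : ℝ)) (b := 1)).exists_bound_of_continuousOn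
    hcont.continuousOn
  set K : ℝ := ‖(Complex.Gamma (1 / 2))⁻¹‖ *
      ∫ s in (0 : ℝ)..1,
        ‖(s : ℂ) ^ ((1 / 2 : ℂ) - 1) * (1 - (s : ℂ)) ^ ((1 / 2 : ℂ) - 1)‖ with hK
  have hK0 : 0 ≤ K := mul_nonneg (norm_nonneg _)
    (intervalIntegral.integral_nonneg zero_le_one fun s _ => norm_nonneg _)
  refine ⟨3 * (M * K), ?_⟩
  intro a x φ r ha hx _ hφ hsupp hr1 hr2
  have hM0 : 0 ≤ M := (norm_nonneg _).trans (hM r ⟨hr1, hr2⟩)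
  set A : ℝ := 3 * a / (8 * x) with hA
  have hA0 : 0 < A := by positivity
  have hA4 : 3 * a / (2 * x) = 4 * A := by rw [hA]; field_simp; norm_num
  rw [hA4] at hsupp
  have hsub : Set.Icc A (4 * A) ⊆ Set.Ioi 0 := fun u hu => hA0.trans_le hu.1
  rw [setIntegral_eq_of_subset_of_forall_sdiff_eq_zero measurableSet_Ioi hsub
    (fun u hu => by simp [hsupp u hu.2])]
  have := norm_setIntegral_le_of_norm_le_const (μ := volume) (s := Set.Icc A (4 * A))
    (f := fun u : ℝ => besselJ (2 * Complex.I * (r : ℂ)) u * (φ u : ℂ) / (u : ℂ))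
    (C := M * K / A) (by simp) (fun u hu => by
      have hu0 : 0 < u := hsub hu
      have hb := bessel_bound (2 * Complex.I * (r : ℂ)) (by simp) u hu0
      have hb2 : ‖besselJ (2 * Complex.I * (r : ℂ)) u‖ ≤ M * K :=
        hb.trans (mul_le_mul_of_nonneg_right (hM r ⟨hr1, hr2⟩) hK0)
      have hp : ‖(φ u : ℂ)‖ ≤ 1 := by
        rw [Complex.norm_real, Real.norm_of_nonneg (hφ u).1]; exact (hφ u).2
      have hn : ‖(u : ℂ)‖ = u := by rw [Complex.norm_real, Real.norm_of_nonneg hu0.le]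
      rw [norm_div, norm_mul, hn]
      have h3 : ‖besselJ (2 * Complex.I * (r : ℂ)) u‖ * ‖(φ u : ℂ)‖ ≤ M * K :=
        (mul_le_of_le_one_right (norm_nonneg _) hp).trans hb2
      exact div_le_div₀ (by positivity) h3 hA0 hu.1)
  refine this.trans (le_of_eq ?_)
  rw [Real.volume_real_Icc_of_le (by linarith)]
  field_simp
  ring
end

section
/- For every ε > 0 and every c₀ > 0 there exists a constant C = C(ε, c₀) such that for all k ∈ {1/2, 3/2}, all a ≥ c₀, all x ≥ 2, every φ as in the context, and every real r with 0 < |r| ≤ 1, one has |φ̂(r)| ≤ C·(ax)^ε. -/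
open Real MeasureTheory

/-- `φ̂(r)` for weight `k` and real `r ≠ 0`. -/
noncomputable def phiHat (k : ℝ) (φ : ℝ → ℝ) (r : ℝ) : ℂ :=
  (π : ℂ) ^ 2 * Complex.exp ((1 + (k : ℂ)) * (π : ℂ) * Complex.I / 2) *
    (∫ u in Set.Ioi (0 : ℝ),
      (Complex.cos ((k : ℂ) * (π : ℂ) / 2 + (π : ℂ) * Complex.I * (r : ℂ)) *
          besselJ (2 * Complex.I * (r : ℂ)) u -
        Complex.cos ((k : ℂ) * (π : ℂ) / 2 - (π : ℂ) * Complex.I * (r : ℂ)) *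
          besselJ (-(2 * Complex.I * (r : ℂ))) u) * (φ u : ℂ) / (u : ℂ)) /
    ((Real.sinh (π * r) : ℂ) * ((Real.cosh (2 * π * r) : ℂ) + (Real.cos (π * k) : ℂ)) *
      Complex.Gamma (1 / 2 - (k : ℂ) / 2 + Complex.I * (r : ℂ)) *
      Complex.Gamma (1 / 2 - (k : ℂ) / 2 - Complex.I * (r : ℂ)))

/-- Dirichlet-type series in `s = log (u/2)`. -/
noncomputable def ZZ (ν : ℂ) (d : ℕ → ℂ) (s : ℝ) : ℂ :=
  ∑' j : ℕ, d j * Complex.exp ((2 * (j : ℂ) + ν) * (s : ℂ))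

lemma norm_exp_term (ν : ℂ) (hν : ν.re = 0) (j : ℕ) (s : ℝ) :
    ‖Complex.exp ((2 * (j : ℂ) + ν) * (s : ℂ))‖ = (Real.exp (2 * s)) ^ j := by
  rw [Complex.norm_exp, ← Real.exp_nat_mul]
  congr 1
  simp [hν]
  ring

lemma ZZ_bound_term (ν : ℂ) (hν : ν.re = 0) (d : ℕ → ℂ) (K B : ℝ)
    (hd : ∀ j, ‖d j‖ ≤ K * (B ^ j / (Nat.factorial j : ℝ))) (s : ℝ) (j : ℕ) :
    ‖d j * Complex.exp ((2 * (j : ℂ) + ν) * (s : ℂ))‖ ≤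
      K * ((B * Real.exp (2 * s)) ^ j / (Nat.factorial j : ℝ)) := by
  rw [norm_mul, norm_exp_term ν hν]
  calc ‖d j‖ * (Real.exp (2 * s)) ^ j ≤ (K * (B ^ j / (Nat.factorial j : ℝ))) * (Real.exp (2 * s)) ^ j :=
        mul_le_mul_of_nonneg_right (hd j) (by positivity)
    _ = _ := by rw [mul_pow]; ring

lemma ZZ_summable (ν : ℂ) (hν : ν.re = 0) (d : ℕ → ℂ) (K B : ℝ)
    (hd : ∀ j, ‖d j‖ ≤ K * (B ^ j / (Nat.factorial j : ℝ))) (s : ℝ) :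
    Summable fun j : ℕ => d j * Complex.exp ((2 * (j : ℂ) + ν) * (s : ℂ)) :=
  Summable.of_norm_bounded ((Real.summable_pow_div_factorial _).mul_left K)
    (ZZ_bound_term ν hν d K B hd s)

lemma deriv_coeff_bound (ν : ℂ) (hν2 : ‖ν‖ ≤ 2) (d : ℕ → ℂ) (K B : ℝ)
    (hd : ∀ j, ‖d j‖ ≤ K * (B ^ j / (Nat.factorial j : ℝ))) (j : ℕ) :
    ‖(2 * (j : ℂ) + ν) * d j‖ ≤ (2 * K) * ((2 * B) ^ j / (Nat.factorial j : ℝ)) := by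
  have h1 : ‖2 * (j : ℂ) + ν‖ ≤ 2 * 2 ^ j := by
    have h2 : (j : ℝ) + 1 ≤ 2 ^ j := by
      have h3 : j + 1 ≤ 2 ^ j := Nat.lt_two_pow_self
      have h4 : ((j + 1 : ℕ) : ℝ) ≤ ((2 ^ j : ℕ) : ℝ) := Nat.cast_le.2 h3
      push_cast at h4
      exact h4
    calc ‖2 * (j : ℂ) + ν‖ ≤ ‖2 * (j : ℂ)‖ + ‖ν‖ := norm_add_le _ _
      _ ≤ 2 * j + 2 := by
          have : ‖2 * (j : ℂ)‖ = 2 * j := by simp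
          linarith
      _ ≤ _ := by linarith
  rw [norm_mul]
  calc _ ≤ (2 * 2 ^ j) * (K * (B ^ j / (Nat.factorial j : ℝ))) :=
        mul_le_mul h1 (hd j) (norm_nonneg _) (by positivity)
    _ = _ := by rw [mul_pow]; ring

lemma ZZ_hasDerivAt (ν : ℂ) (hν : ν.re = 0) (hν2 : ‖ν‖ ≤ 2) (d : ℕ → ℂ) (K B : ℝ)
    (hK : 0 ≤ K) (hB : 0 ≤ B)
    (hd : ∀ j, ‖d j‖ ≤ K * (B ^ j / (Nat.factorial j : ℝ))) (s : ℝ) :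
    HasDerivAt (ZZ ν d) (ZZ ν (fun j => (2 * (j : ℂ) + ν) * d j) s) s := by
  unfold ZZ
  refine hasDerivAt_tsum_of_isPreconnected (t := Set.Iio (s + 1)) (y₀ := s)
    (g := fun (j : ℕ) (s : ℝ) => d j * Complex.exp ((2 * (j : ℂ) + ν) * (s : ℂ)))
    (g' := fun (j : ℕ) (s : ℝ) =>
      ((2 * (j : ℂ) + ν) * d j) * Complex.exp ((2 * (j : ℂ) + ν) * (s : ℂ)))
    (u := fun j => (2 * K) * (((2 * B) * Real.exp (2 * (s + 1))) ^ j / (Nat.factorial j : ℝ)))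
    ((Real.summable_pow_div_factorial _).mul_left _) isOpen_Iio isPreconnected_Iio
    ?_ ?_ (Set.mem_Iio.2 (lt_add_one s)) (ZZ_summable ν hν d K B hd s) (Set.mem_Iio.2 (lt_add_one s))
  · intro n y _
    have h1 : HasDerivAt (fun y : ℝ => (2 * (n : ℂ) + ν) * (y : ℂ)) ((2 * (n : ℂ) + ν) * 1) y :=
      (Complex.ofRealCLM.hasDerivAt (x := y)).const_mul _
    have h2 := (h1.cexp).const_mul (d n)
    exact h2.congr_deriv (by ring)
  · intro n y hy
    refine (ZZ_bound_term ν hν _ _ _ (deriv_coeff_bound ν hν2 d K B hd) y n).trans ?_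
    have : Real.exp (2 * y) ≤ Real.exp (2 * (s + 1)) := by
      apply Real.exp_le_exp.2
      have := Set.mem_Iio.1 hy
      linarith
    gcongr

lemma ZZ_ode (ν : ℂ) (hν : ν.re = 0) (hν2 : ‖ν‖ ≤ 2) (d : ℕ → ℂ) (K B : ℝ)
    (hd : ∀ j, ‖d j‖ ≤ K * (B ^ j / (Nat.factorial j : ℝ)))
    (hrec : ∀ j : ℕ, ((j : ℂ) + 1) * ((j : ℂ) + 1 + ν) * d (j + 1) = - d j) (s : ℝ) :
    ZZ ν (fun j => (2 * (j : ℂ) + ν) * ((2 * (j : ℂ) + ν) * d j)) s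
      = -(4 * Complex.exp (2 * (s : ℂ)) - ν ^ 2) * ZZ ν d s := by
  have hb1 := deriv_coeff_bound ν hν2 d K B hd
  have hb2 := deriv_coeff_bound ν hν2 _ _ _ hb1
  have hs0 := ZZ_summable ν hν d K B hd s
  have hs2 := ZZ_summable ν hν _ _ _ hb2 s
  have key : ZZ ν (fun j => (2 * (j : ℂ) + ν) * ((2 * (j : ℂ) + ν) * d j)) s - ν ^ 2 * ZZ ν d s
      = -(4 * Complex.exp (2 * (s : ℂ))) * ZZ ν d s := by
    unfold ZZ
    rw [← tsum_mul_left, ← tsum_mul_left, ← Summable.tsum_sub hs2 (hs0.mul_left _),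
      Summable.tsum_eq_zero_add (hs2.sub (hs0.mul_left _))]
    rw [show ∀ x y : ℂ, x = 0 → x + y = y from fun x y h => by rw [h, zero_add]]
    · refine tsum_congr fun j => ?_
      have he : Complex.exp ((2 * ((j + 1 : ℕ) : ℂ) + ν) * (s : ℂ))
          = Complex.exp (2 * (s : ℂ)) * Complex.exp ((2 * (j : ℂ) + ν) * (s : ℂ)) := by
        rw [← Complex.exp_add]; congr 1; push_cast; ring
      rw [he]
      have h := hrec j
      have h' : d j = -(((j : ℂ) + 1) * ((j : ℂ) + 1 + ν) * d (j + 1)) := by rw [h]; ring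
      rw [h']
      push_cast
      ring
    · push_cast
      ring
  linear_combination key

lemma energy (y y' : ℝ → ℂ) (r : ℝ) (h1 : ∀ s, HasDerivAt y (y' s) s)
    (h2 : ∀ s, HasDerivAt y' (-((4 * Real.exp (2 * s) + 4 * r ^ 2 : ℝ) : ℂ) * y s) s)
    (s : ℝ) (hs : 0 ≤ s) : ‖y s‖ ≤ ‖y 0‖ + ‖y' 0‖ := by
  set q : ℝ → ℝ := fun s => 4 * Real.exp (2 * s) + 4 * r ^ 2 with hq
  have hqpos : ∀ s, 0 < q s := fun s => by simp only [hq]; positivity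
  have hqd : ∀ s, HasDerivAt q (8 * Real.exp (2 * s)) s := by
    intro s
    have h : HasDerivAt (fun s : ℝ => 2 * s) (2 * 1) s := (hasDerivAt_id s).const_mul 2
    have := (h.exp.const_mul 4).add_const (4 * r ^ 2)
    exact this.congr_deriv (by ring)
  have hG : ∀ s, HasDerivAt (fun s => ‖y s‖ ^ 2 + ‖y' s‖ ^ 2 / q s)
      (-(‖y' s‖ ^ 2 * (8 * Real.exp (2 * s)) / (q s) ^ 2)) s := by
    intro s
    have a1 := (h1 s).norm_sq
    have a2 := ((h2 s).norm_sq).div (hqd s) (hqpos s).ne'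
    have a3 := a1.add a2
    refine a3.congr_deriv ?_
    have e : -((4 * Real.exp (2 * s) + 4 * r ^ 2 : ℝ) : ℂ) * y s = (-(q s)) • y s := by
      rw [Complex.real_smul]; push_cast [hq]; ring
    rw [e, inner_smul_right, real_inner_comm (y' s) (y s)]
    have := (hqpos s).ne'
    field_simp
    ring
  have hanti := antitone_of_hasDerivAt_nonpos hG (fun s => by
    have := hqpos s
    simp only [Pi.zero_apply, Left.neg_nonpos_iff]
    positivity)
  have := hanti hs
  simp only at this
  have hq0 : 1 ≤ q 0 := by simp only [hq]; simp; nlinarith [sq_nonneg r]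
  have h3 : ‖y' 0‖ ^ 2 / q 0 ≤ ‖y' 0‖ ^ 2 := div_le_self (sq_nonneg _) hq0
  have h4 : 0 ≤ ‖y' s‖ ^ 2 / q s := div_nonneg (sq_nonneg _) (hqpos s).le
  refine abs_le_of_sq_le_sq' ?_ (by positivity) |>.2
  nlinarith [norm_nonneg (y 0), norm_nonneg (y' 0), mul_nonneg (norm_nonneg (y 0)) (norm_nonneg (y' 0))]

lemma coeff_bounds (A : ℂ → ℂ) (hA : Differentiable ℂ A) :
    ∃ K : ℝ, 0 ≤ K ∧ ∀ (ν : ℂ), ν.re = 0 → ‖ν‖ ≤ 2 → ∀ j : ℕ,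
      ‖A ν * (Complex.Gamma ((j : ℂ) + 1 + ν))⁻¹‖ ≤ K ∧
      ‖A ν * (Complex.Gamma ((j : ℂ) + 1 + ν))⁻¹
        - A (-ν) * (Complex.Gamma ((j : ℂ) + 1 + -ν))⁻¹‖ ≤ ((j : ℝ) + 1) * K * ‖ν‖ := by
  set f : ℂ → ℂ := fun ν => A ν * (Complex.Gamma (1 + ν))⁻¹ with hf
  have hfd : Differentiable ℂ f :=
    hA.mul (Complex.differentiable_one_div_Gamma.comp ((differentiable_const 1).add differentiable_id))
  obtain ⟨M, hM⟩ := (isCompact_closedBall (0 : ℂ) 2).exists_bound_of_continuousOn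
    hfd.continuous.continuousOn
  obtain ⟨L, hL⟩ := (isCompact_closedBall (0 : ℂ) 2).exists_bound_of_continuousOn
    (f := deriv f) (hfd.contDiff (n := 1)).continuous_deriv_one.continuousOn
  have hM0 : 0 ≤ M := (norm_nonneg _).trans (hM 0 (by simp))
  have hL0 : 0 ≤ L := (norm_nonneg _).trans (hL 0 (by simp))
  refine ⟨2 * (M + L), by positivity, ?_⟩
  have hnorm : ∀ (ν : ℂ), ν.re = 0 → ∀ j : ℕ, 1 ≤ ‖(j : ℂ) + 1 + ν‖ := by
    intro ν h j
    have := Complex.re_le_norm ((j : ℂ) + 1 + ν)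
    simp [h] at this
    have : (0 : ℝ) ≤ j := by positivity
    linarith
  have hrec : ∀ (ν : ℂ), ν.re = 0 → ∀ j : ℕ, A ν * (Complex.Gamma (((j + 1 : ℕ) : ℂ) + 1 + ν))⁻¹
      = (A ν * (Complex.Gamma ((j : ℂ) + 1 + ν))⁻¹) / ((j : ℂ) + 1 + ν) := by
    intro ν h j
    have hne : (j : ℂ) + 1 + ν ≠ 0 := by
      rw [← norm_pos_iff]; linarith [hnorm ν h j]
    rw [Complex.one_div_Gamma_eq_self_mul_one_div_Gamma_add_one ((j : ℂ) + 1 + ν)]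
    rw [show ((j + 1 : ℕ) : ℂ) + 1 + ν = (j : ℂ) + 1 + ν + 1 by push_cast; ring]
    field_simp
  have hbd : ∀ (ν : ℂ), ν.re = 0 → ‖ν‖ ≤ 2 → ∀ j : ℕ,
      ‖A ν * (Complex.Gamma ((j : ℂ) + 1 + ν))⁻¹‖ ≤ M := by
    intro ν h h2 j
    induction j with
    | zero => simpa [hf] using hM ν (by simpa using h2)
    | succ j ih =>
      rw [hrec ν h j, norm_div]
      exact (div_le_self (norm_nonneg _) (hnorm ν h j)).trans ih
  intro ν h h2 j
  refine ⟨(hbd ν h h2 j).trans (by linarith), ?_⟩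
  have hn : (-ν).re = 0 := by simp [h]
  have hn2 : ‖-ν‖ ≤ 2 := by simpa using h2
  induction j with
  | zero =>
    have := Convex.norm_image_sub_le_of_norm_deriv_le (𝕜 := ℂ) (f := f) (C := L)
      (fun x _ => hfd x) hL (convex_closedBall (0 : ℂ) 2)
      (x := -ν) (y := ν) (by simpa using h2) (by simpa using h2)
    have h3 : ‖ν - -ν‖ = 2 * ‖ν‖ := by
      rw [sub_neg_eq_add, ← two_mul, norm_mul]; simp
    rw [h3] at this
    simp only [hf] at this
    simp only [Nat.cast_zero, zero_add]
    refine this.trans ?_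
    nlinarith [norm_nonneg ν, mul_nonneg hM0 (norm_nonneg ν)]
  | succ j ih =>
    rw [hrec ν h j, hrec (-ν) hn j]
    set p := A ν * (Complex.Gamma ((j : ℂ) + 1 + ν))⁻¹
    set p' := A (-ν) * (Complex.Gamma ((j : ℂ) + 1 + -ν))⁻¹ with hp'
    have b1 := hnorm ν h j
    have b2 := hnorm (-ν) hn j
    have n1 : (j : ℂ) + 1 + ν ≠ 0 := by rw [← norm_pos_iff]; linarith
    have n2 : (j : ℂ) + 1 + -ν ≠ 0 := by rw [← norm_pos_iff]; linarith
    have hp : ‖p'‖ ≤ M := hbd (-ν) hn hn2 j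
    clear hp'
    clear_value p p'
    have e : p / ((j : ℂ) + 1 + ν) - p' / ((j : ℂ) + 1 + -ν)
        = (p - p') / ((j : ℂ) + 1 + ν)
          + (p' * (-(2 * ν))) / (((j : ℂ) + 1 + ν) * ((j : ℂ) + 1 + -ν)) := by
      field_simp
      ring
    rw [e]
    refine (norm_add_le _ _).trans ?_
    rw [norm_div, norm_div, norm_mul p', norm_neg, norm_mul 2 ν, norm_mul]
    have c1 := (div_le_self (norm_nonneg (p - p')) b1).trans ih
    have c2 : ‖p'‖ * (‖(2 : ℂ)‖ * ‖ν‖) / (‖(j : ℂ) + 1 + ν‖ * ‖(j : ℂ) + 1 + -ν‖) ≤ M * (2 * ‖ν‖) := by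
      refine (div_le_self (by positivity) (by nlinarith)).trans ?_
      simp only [Complex.norm_ofNat]
      gcongr
    push_cast
    nlinarith [mul_nonneg hL0 (norm_nonneg ν)]

/-- Coefficients of the series with the weight `A`. -/
noncomputable def cc (A : ℂ → ℂ) (ν : ℂ) (j : ℕ) : ℂ :=
  (-1 : ℂ) ^ j / (Nat.factorial j : ℂ) * (A ν * (Complex.Gamma ((j : ℂ) + 1 + ν))⁻¹)

lemma norm_sign_fact (j : ℕ) : ‖(-1 : ℂ) ^ j / (Nat.factorial j : ℂ)‖ = 1 / (Nat.factorial j : ℝ) := by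
  simp

lemma cc_rec (A : ℂ → ℂ) (ν : ℂ) (j : ℕ) :
    ((j : ℂ) + 1) * ((j : ℂ) + 1 + ν) * cc A ν (j + 1) = - cc A ν j := by
  unfold cc
  rw [Complex.one_div_Gamma_eq_self_mul_one_div_Gamma_add_one ((j : ℂ) + 1 + ν)]
  rw [show ((j + 1 : ℕ) : ℂ) + 1 + ν = (j : ℂ) + 1 + ν + 1 by push_cast; ring]
  rw [Nat.factorial_succ]
  have h1 : (Nat.factorial j : ℂ) ≠ 0 := by exact_mod_cast Nat.factorial_ne_zero j
  have h2 : (j : ℂ) + 1 ≠ 0 := by exact_mod_cast Nat.succ_ne_zero j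
  push_cast
  rw [pow_succ]
  field_simp

lemma exp_sub_bound (r s : ℝ) :
    ‖Complex.exp ((2 * Complex.I * (r : ℂ)) * (s : ℂ))
      - Complex.exp (-(2 * Complex.I * (r : ℂ)) * (s : ℂ))‖ ≤ 4 * |r| * |s| := by
  have e : Complex.exp ((2 * Complex.I * (r : ℂ)) * (s : ℂ))
      - Complex.exp (-(2 * Complex.I * (r : ℂ)) * (s : ℂ))
      = Complex.exp (((-(2 * r * s) : ℝ) : ℂ) * Complex.I) *
        (Complex.exp (Complex.I * ((4 * r * s : ℝ) : ℂ)) - 1) := by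
    rw [mul_sub, ← Complex.exp_add, mul_one]
    congr 2 <;> (push_cast; ring)
  rw [e, norm_mul, Complex.norm_exp_ofReal_mul_I, one_mul]
  refine Real.norm_exp_I_mul_ofReal_sub_one_le.trans ?_
  simp [abs_mul]

lemma main_bound (A : ℂ → ℂ) (hA : Differentiable ℂ A) :
    ∃ C : ℝ, 0 ≤ C ∧ ∀ r s : ℝ, |r| ≤ 1 →
      ‖ZZ (2 * Complex.I * (r : ℂ)) (cc A (2 * Complex.I * (r : ℂ))) s
        - ZZ (-(2 * Complex.I * (r : ℂ))) (cc A (-(2 * Complex.I * (r : ℂ)))) s‖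
      ≤ C * |r| * (1 + |s|) := by
  obtain ⟨K, hK, hKb⟩ := coeff_bounds A hA
  set S2 : ℝ := ∑' j : ℕ, (2 : ℝ) ^ j / (Nat.factorial j : ℝ) with hS2
  set S4 : ℝ := ∑' j : ℕ, (4 : ℝ) ^ j / (Nat.factorial j : ℝ) with hS4
  have hS2s := (Real.summable_pow_div_factorial 2).hasSum
  have hS4s := (Real.summable_pow_div_factorial 4).hasSum
  rw [← hS2] at hS2s
  rw [← hS4] at hS4s
  have hS20 : 0 ≤ S2 := tsum_nonneg fun j => by positivity
  have hS40 : 0 ≤ S4 := tsum_nonneg fun j => by positivity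
  refine ⟨4 * K * S2 + 8 * K * S4, by positivity, ?_⟩
  intro r s hr
  set ν : ℂ := 2 * Complex.I * (r : ℂ) with hν
  have hre : ν.re = 0 := by simp [hν]
  have hre' : (-ν).re = 0 := by simp [hre]
  have hnν : ‖ν‖ = 2 * |r| := by simp [hν]
  have hn2 : ‖ν‖ ≤ 2 := by rw [hnν]; linarith
  have hn2' : ‖-ν‖ ≤ 2 := by rw [norm_neg]; exact hn2
  have hν2 : ν ^ 2 = -4 * (r : ℂ) ^ 2 := by
    rw [hν]; ring_nf; rw [Complex.I_sq]; ring
  -- coefficient bounds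
  have hc : ∀ μ : ℂ, μ.re = 0 → ‖μ‖ ≤ 2 → ∀ j, ‖cc A μ j‖ ≤ K * (1 / (Nat.factorial j : ℝ)) := by
    intro μ h1 h2 j
    unfold cc
    rw [norm_mul, norm_sign_fact, mul_comm]
    exact mul_le_mul_of_nonneg_right (hKb μ h1 h2 j).1 (by positivity)
  have hc1 : ∀ μ : ℂ, μ.re = 0 → ‖μ‖ ≤ 2 → ∀ j,
      ‖cc A μ j‖ ≤ K * ((1 : ℝ) ^ j / (Nat.factorial j : ℝ)) := by
    intro μ h1 h2 j
    rw [one_pow]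
    exact hc μ h1 h2 j
  have hpow : ∀ j : ℕ, (j : ℝ) + 1 ≤ 2 ^ j := by
    intro j
    have h3 : j + 1 ≤ 2 ^ j := Nat.lt_two_pow_self
    have h4 : ((j + 1 : ℕ) : ℝ) ≤ ((2 ^ j : ℕ) : ℝ) := Nat.cast_le.2 h3
    push_cast at h4
    exact h4
  have hcd : ∀ j, ‖cc A ν j - cc A (-ν) j‖ ≤ ((j : ℝ) + 1) * (2 * K * |r|) * (1 / (Nat.factorial j : ℝ)) := by
    intro j
    unfold cc
    rw [← mul_sub, norm_mul, norm_sign_fact, mul_comm]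
    refine mul_le_mul_of_nonneg_right ((hKb ν hre hn2 j).2.trans (le_of_eq ?_)) (by positivity)
    rw [hnν]; ring
  -- bound for `s ≤ 0`
  have hneg : ∀ s : ℝ, s ≤ 0 → ‖ZZ ν (cc A ν) s - ZZ (-ν) (cc A (-ν)) s‖
      ≤ (2 * K * |r| + 4 * K * |r| * |s|) * S2 := by
    intro s hs
    unfold ZZ
    rw [← Summable.tsum_sub (ZZ_summable ν hre _ _ _ (hc1 ν hre hn2) s)
      (ZZ_summable (-ν) hre' _ _ _ (hc1 (-ν) hre' hn2') s)]
    refine tsum_of_norm_bounded (hS2s.mul_left _) fun j => ?_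
    have e : cc A ν j * Complex.exp ((2 * (j : ℂ) + ν) * (s : ℂ))
        - cc A (-ν) j * Complex.exp ((2 * (j : ℂ) + -ν) * (s : ℂ))
        = (cc A ν j - cc A (-ν) j) * Complex.exp ((2 * (j : ℂ) + ν) * (s : ℂ))
        + cc A (-ν) j * (Complex.exp ((2 * (j : ℂ) + 0) * (s : ℂ)) *
          (Complex.exp (ν * (s : ℂ)) - Complex.exp (-ν * (s : ℂ)))) := by
      rw [mul_sub (Complex.exp ((2 * (j : ℂ) + 0) * (s : ℂ))), ← Complex.exp_add, ← Complex.exp_add,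
        ← add_mul, ← add_mul, add_zero]
      ring
    rw [e]
    refine (norm_add_le _ _).trans ?_
    rw [norm_mul, norm_mul (cc A (-ν) j), norm_mul, norm_exp_term ν hre, norm_exp_term 0 (by simp)]
    have hE : (Real.exp (2 * s)) ^ j ≤ 1 :=
      pow_le_one₀ (Real.exp_pos _).le (Real.exp_le_one_iff.2 (by linarith))
    have hE0 : 0 ≤ (Real.exp (2 * s)) ^ j := by positivity
    have t1 : ‖cc A ν j - cc A (-ν) j‖ * (Real.exp (2 * s)) ^ j
        ≤ (2 ^ j * (2 * K * |r|) * (1 / (Nat.factorial j : ℝ))) * 1 := by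
      refine mul_le_mul ((hcd j).trans ?_) hE hE0 (by positivity)
      have := hpow j
      gcongr
    have t2 : ‖cc A (-ν) j‖ * ((Real.exp (2 * s)) ^ j *
        ‖Complex.exp (ν * (s : ℂ)) - Complex.exp (-ν * (s : ℂ))‖)
        ≤ (K * (1 / (Nat.factorial j : ℝ))) * (1 * (4 * |r| * |s|)) := by
      refine mul_le_mul (hc (-ν) hre' hn2' j) (mul_le_mul hE (exp_sub_bound r s) (norm_nonneg _)
        zero_le_one) (by positivity) (by positivity)
    have t3 : (K * (1 / (Nat.factorial j : ℝ))) * (1 * (4 * |r| * |s|))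
        ≤ (2 ^ j * K * (1 / (Nat.factorial j : ℝ))) * (1 * (4 * |r| * |s|)) := by
      have : (1 : ℝ) ≤ 2 ^ j := one_le_pow₀ (by norm_num)
      have : K ≤ 2 ^ j * K := by nlinarith
      gcongr
    refine (add_le_add t1 (t2.trans t3)).trans (le_of_eq ?_)
    ring
  -- bound for the derivative at `0`
  have hder : ‖ZZ ν (fun j => (2 * (j : ℂ) + ν) * cc A ν j) 0
      - ZZ (-ν) (fun j => (2 * (j : ℂ) + -ν) * cc A (-ν) j) 0‖ ≤ (8 * K * |r|) * S4 := by
    unfold ZZ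
    rw [← Summable.tsum_sub
      (ZZ_summable ν hre _ _ _ (deriv_coeff_bound ν hn2 _ _ _ (hc1 ν hre hn2)) 0)
      (ZZ_summable (-ν) hre' _ _ _ (deriv_coeff_bound (-ν) hn2' _ _ _ (hc1 (-ν) hre' hn2')) 0)]
    refine tsum_of_norm_bounded (hS4s.mul_left _) fun j => ?_
    have e : (2 * (j : ℂ) + ν) * cc A ν j * Complex.exp ((2 * (j : ℂ) + ν) * ((0 : ℝ) : ℂ))
        - (2 * (j : ℂ) + -ν) * cc A (-ν) j * Complex.exp ((2 * (j : ℂ) + -ν) * ((0 : ℝ) : ℂ))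
        = (2 * (j : ℂ)) * (cc A ν j - cc A (-ν) j) + (ν * cc A ν j + ν * cc A (-ν) j) := by
      simp only [Complex.ofReal_zero, mul_zero, Complex.exp_zero]
      ring
    rw [e]
    refine (norm_add_le _ _).trans ((add_le_add le_rfl (norm_add_le _ _)).trans ?_)
    rw [norm_mul, norm_mul ν, norm_mul ν, hnν]
    have h2j : ‖2 * (j : ℂ)‖ = 2 * j := by simp
    rw [h2j]
    have hp := hpow j
    have hj0 : (0 : ℝ) ≤ j := by positivity
    have hf0 : 0 ≤ (1 / (Nat.factorial j : ℝ)) := by positivity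
    have h44 : (4 : ℝ) ^ j = 2 ^ j * 2 ^ j := by rw [← mul_pow]; norm_num
    have t1 : 2 * (j : ℝ) * ‖cc A ν j - cc A (-ν) j‖
        ≤ 2 * (j : ℝ) * (((j : ℝ) + 1) * (2 * K * |r|) * (1 / (Nat.factorial j : ℝ))) := by
      gcongr
      exact hcd j
    have t2 : 2 * |r| * ‖cc A ν j‖ ≤ 2 * |r| * (K * (1 / (Nat.factorial j : ℝ))) := by
      gcongr
      exact hc ν hre hn2 j
    have t3 : 2 * |r| * ‖cc A (-ν) j‖ ≤ 2 * |r| * (K * (1 / (Nat.factorial j : ℝ))) := by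
      gcongr
      exact hc (-ν) hre' hn2' j
    have t4 : (j : ℝ) * (j + 1) + 1 ≤ 4 ^ j := by rw [h44]; nlinarith
    have hX : 0 ≤ 4 * K * |r| * (1 / (Nat.factorial j : ℝ)) := by positivity
    have t5 := mul_le_mul_of_nonneg_left t4 hX
    have t6 : 8 * K * |r| * (4 ^ j / (Nat.factorial j : ℝ))
      = 2 * (4 * K * |r| * (1 / (Nat.factorial j : ℝ)) * 4 ^ j) := by ring
    have t7 : 0 ≤ 4 * K * |r| * (1 / (Nat.factorial j : ℝ)) * 4 ^ j := by positivity
    rw [t6]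
    linarith
  rcases le_total s 0 with hs | hs
  · refine (hneg s hs).trans ?_
    have x1 : 0 ≤ K * |r| * S2 := by positivity
    have x2 : 0 ≤ K * |r| * S4 := by positivity
    have x3 : 0 ≤ K * |r| * S4 * |s| := by positivity
    have x4 : 0 ≤ K * |r| * S2 * |s| := by positivity
    linarith
  · have hode : ∀ μ : ℂ, μ.re = 0 → ‖μ‖ ≤ 2 → μ ^ 2 = -4 * (r : ℂ) ^ 2 → ∀ s : ℝ,
        HasDerivAt (ZZ μ (fun j => (2 * (j : ℂ) + μ) * cc A μ j))
          (-((4 * Real.exp (2 * s) + 4 * r ^ 2 : ℝ) : ℂ) * ZZ μ (cc A μ) s) s := by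
      intro μ h1 h2 h3 s
      have := ZZ_hasDerivAt μ h1 h2 _ _ _ (by positivity) (by norm_num)
        (deriv_coeff_bound μ h2 _ _ _ (hc1 μ h1 h2)) s
      rw [ZZ_ode μ h1 h2 _ _ _ (hc1 μ h1 h2) (cc_rec A μ) s, h3] at this
      refine this.congr_deriv ?_
      push_cast
      ring
    have hen := energy (fun s => ZZ ν (cc A ν) s - ZZ (-ν) (cc A (-ν)) s)
      (fun s => ZZ ν (fun j => (2 * (j : ℂ) + ν) * cc A ν j) s
        - ZZ (-ν) (fun j => (2 * (j : ℂ) + -ν) * cc A (-ν) j) s) r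
      (fun s => (ZZ_hasDerivAt ν hre hn2 _ _ _ hK zero_le_one (hc1 ν hre hn2) s).sub
        (ZZ_hasDerivAt (-ν) hre' hn2' _ _ _ hK zero_le_one (hc1 (-ν) hre' hn2') s))
      (fun s => ((hode ν hre hn2 hν2 s).sub
        (hode (-ν) hre' hn2' (by rw [neg_sq]; exact hν2) s)).congr_deriv (by ring)) s hs
    have h0 := hneg 0 le_rfl
    simp only [abs_zero, mul_zero, add_zero] at h0
    refine hen.trans ((add_le_add h0 hder).trans ?_)
    have x1 : 0 ≤ K * |r| * S2 := by positivity
    have x3 : 0 ≤ K * |r| * S4 * |s| := by positivity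
    have x4 : 0 ≤ K * |r| * S2 * |s| := by positivity
    linarith

lemma besselJ_eq (A : ℂ → ℂ) (ν : ℂ) (u : ℝ) :
    A ν * besselJ ν u = ZZ ν (cc A ν) (Real.log (u / 2)) := by
  unfold besselJ ZZ cc
  rw [← tsum_mul_left]
  refine tsum_congr fun j => ?_
  rw [div_eq_mul_inv, div_eq_mul_inv, mul_inv]
  ring

lemma inv_gamma_bound (z : ℂ) : ∃ M : ℝ, 0 ≤ M ∧ ∀ r : ℝ, |r| ≤ 1 →
    ‖(Complex.Gamma (z + Complex.I * (r : ℂ)))⁻¹‖ ≤ M ∧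
    ‖(Complex.Gamma (z - Complex.I * (r : ℂ)))⁻¹‖ ≤ M := by
  obtain ⟨M, hM⟩ := (isCompact_closedBall z 1).exists_bound_of_continuousOn
    (f := fun s => (Complex.Gamma s)⁻¹) Complex.differentiable_one_div_Gamma.continuous.continuousOn
  refine ⟨M, (norm_nonneg _).trans (hM z (by simp)), fun r hr => ⟨hM _ ?_, hM _ ?_⟩⟩
  · simpa [dist_eq_norm] using hr
  · simpa [dist_eq_norm] using hr

lemma abs_le_abs_sinh (r : ℝ) : |r| ≤ |Real.sinh (π * r)| := by
  rw [Real.abs_sinh, abs_mul, abs_of_pos Real.pi_pos]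
  have h1 : |r| ≤ π * |r| := by nlinarith [Real.pi_gt_three, abs_nonneg r]
  exact h1.trans (Real.self_le_sinh_iff.2 (by positivity))

lemma log_bound (ε c₀ : ℝ) (hε : 0 < ε) (hc : 0 < c₀) : ∃ C : ℝ, 0 ≤ C ∧ ∀ a x u : ℝ,
    c₀ ≤ a → 2 ≤ x → u ∈ Set.Icc (3 * a / (8 * x)) (3 * a / (2 * x)) →
    1 + |Real.log (u / 2)| ≤ C * (a * x) ^ ε := by
  set D : ℝ := |Real.log (16 / (3 * c₀ ^ 2))| with hD
  refine ⟨(1 + D) / (2 * c₀) ^ ε + 1 / ε, by positivity, ?_⟩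
  intro a x u ha hx hu
  have ha0 : 0 < a := hc.trans_le ha
  have hx0 : 0 < x := by linarith
  have hax : 0 < a * x := by positivity
  have hu0 : 0 < u := lt_of_lt_of_le (by positivity) hu.1
  have hlog : Real.log (a * x) ≤ (a * x) ^ ε / ε := Real.log_le_rpow_div hax.le hε
  have hpow : (2 * c₀) ^ ε ≤ (a * x) ^ ε :=
    Real.rpow_le_rpow (by positivity) (by nlinarith) hε.le
  have hD0 : 0 ≤ D := abs_nonneg _
  have hcp : 0 < (2 * c₀) ^ ε := by positivity
  have h1 : 1 + D ≤ (1 + D) / (2 * c₀) ^ ε * (a * x) ^ ε := by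
    rw [div_mul_eq_mul_div, le_div_iff₀ hcp]
    exact mul_le_mul_of_nonneg_left hpow (by positivity)
  have hup : Real.log (u / 2) ≤ Real.log (a * x) := by
    apply Real.log_le_log (by positivity)
    have h2 : u ≤ 3 * a / (2 * x) := hu.2
    rw [le_div_iff₀ (by positivity)] at h2
    have h3 : u ≤ 3 * a / 4 := by nlinarith
    nlinarith
  have hlow : -Real.log (u / 2) ≤ Real.log (a * x) + D := by
    have h2 : -Real.log (u / 2) ≤ Real.log ((a * x) * (16 / (3 * c₀ ^ 2))) := by
      rw [← Real.log_inv]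
      apply Real.log_le_log (by positivity)
      have h2 : 3 * a / (8 * x) ≤ u := hu.1
      have h3 : (u / 2)⁻¹ ≤ (3 * a / (8 * x) / 2)⁻¹ := by
        apply inv_anti₀ (by positivity)
        linarith
      refine h3.trans ?_
      have h4 : (3 * a / (8 * x) / 2)⁻¹ = a * x * (16 / (3 * a ^ 2)) := by
        field_simp
        ring
      rw [h4]
      gcongr
    rw [Real.log_mul hax.ne' (by positivity)] at h2
    exact h2.trans (by gcongr; exact le_abs_self _)
  have habs : |Real.log (u / 2)| ≤ (a * x) ^ ε / ε + D :=
    abs_le.2 ⟨by linarith, by linarith⟩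
  have : ((1 + D) / (2 * c₀) ^ ε + 1 / ε) * (a * x) ^ ε
      = (1 + D) / (2 * c₀) ^ ε * (a * x) ^ ε + (a * x) ^ ε / ε := by ring
  rw [this]
  linarith

lemma stmt_k (ε c₀ k : ℝ) (hε : 0 < ε) (hc : 0 < c₀) (hk : Real.cos (π * k) = 0) :
    ∃ C : ℝ, 0 ≤ C ∧ ∀ (a x : ℝ) (φ : ℝ → ℝ) (r : ℝ), c₀ ≤ a → 2 ≤ x →
        (∀ u, 0 ≤ φ u ∧ φ u ≤ 1) →
        (∀ u, u ∉ Set.Icc (3 * a / (8 * x)) (3 * a / (2 * x)) → φ u = 0) →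
        0 < |r| → |r| ≤ 1 →
        ‖phiHat k φ r‖ ≤ C * (a * x) ^ ε := by
  set A : ℂ → ℂ := fun ν => Complex.cos ((k : ℂ) * (π : ℂ) / 2 + (π : ℂ) * ν / 2) with hAdef
  have hA : Differentiable ℂ A := by
    simp only [hAdef]
    fun_prop
  obtain ⟨C1, hC1, hB⟩ := main_bound A hA
  obtain ⟨C2, hC2, hL⟩ := log_bound ε c₀ hε hc
  obtain ⟨M, hM0, hM⟩ := inv_gamma_bound (1 / 2 - (k : ℂ) / 2)
  refine ⟨π ^ 2 * (3 * (C1 * C2)) * (M * M), by positivity, ?_⟩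
  intro a x φ r ha hx hφ hsupp hr0 hr
  have ha0 : 0 < a := hc.trans_le ha
  have hx0 : 0 < x := by linarith
  have hax : 0 < (a * x) ^ ε := by positivity
  set lo : ℝ := 3 * a / (8 * x) with hlo
  set hi : ℝ := 3 * a / (2 * x) with hhi
  have hlo0 : 0 < lo := by positivity
  have hhilo : hi = 4 * lo := by rw [hlo, hhi]; field_simp; norm_num
  -- the integral
  set f : ℝ → ℂ := fun u => (Complex.cos ((k : ℂ) * (π : ℂ) / 2 + (π : ℂ) * Complex.I * (r : ℂ)) *
          besselJ (2 * Complex.I * (r : ℂ)) u -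
        Complex.cos ((k : ℂ) * (π : ℂ) / 2 - (π : ℂ) * Complex.I * (r : ℂ)) *
          besselJ (-(2 * Complex.I * (r : ℂ))) u) * (φ u : ℂ) / (u : ℂ) with hf
  have hint : ‖∫ u in Set.Ioi (0 : ℝ), f u‖ ≤ 3 * (C1 * C2) * |r| * (a * x) ^ ε := by
    rw [setIntegral_eq_of_subset_of_forall_sdiff_eq_zero (s := Set.Icc lo hi) measurableSet_Ioi
      (fun u hu => lt_of_lt_of_le hlo0 hu.1)
      (fun u hu => by simp [hf, hsupp u hu.2])]
    have hb : ∀ u ∈ Set.Icc lo hi, ‖f u‖ ≤ C1 * |r| * (C2 * (a * x) ^ ε) / lo := by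
      intro u hu
      have hu0 : 0 < u := lt_of_lt_of_le hlo0 hu.1
      have e1 : Complex.cos ((k : ℂ) * (π : ℂ) / 2 + (π : ℂ) * Complex.I * (r : ℂ))
          = A (2 * Complex.I * (r : ℂ)) := by
        simp only [hAdef]; congr 1; ring
      have e2 : Complex.cos ((k : ℂ) * (π : ℂ) / 2 - (π : ℂ) * Complex.I * (r : ℂ))
          = A (-(2 * Complex.I * (r : ℂ))) := by
        simp only [hAdef]; congr 1; ring
      simp only [hf]
      rw [e1, e2, besselJ_eq, besselJ_eq, norm_div, norm_mul, Complex.norm_real, Complex.norm_real,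
        Real.norm_eq_abs, Real.norm_eq_abs, abs_of_pos hu0, abs_of_nonneg (hφ u).1]
      have b1 := (hB r (Real.log (u / 2)) hr).trans
        (mul_le_mul_of_nonneg_left (hL a x u ha hx hu) (by positivity))
      refine div_le_div₀ (by positivity) ?_ hlo0 hu.1
      refine (mul_le_mul b1 (hφ u).2 (hφ u).1 (by positivity)).trans (le_of_eq (mul_one _))
    refine (norm_setIntegral_le_of_norm_le_const (by simp) hb).trans (le_of_eq ?_)
    rw [Real.volume_real_Icc_of_le (by linarith), hhilo]
    field_simp
    ring
  have hphi : phiHat k φ r = (π : ℂ) ^ 2 * Complex.exp ((1 + (k : ℂ)) * (π : ℂ) * Complex.I / 2) *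
      (∫ u in Set.Ioi (0 : ℝ), f u) * ((Real.sinh (π * r) : ℂ)⁻¹ * (Real.cosh (2 * π * r) : ℂ)⁻¹ *
      (Complex.Gamma (1 / 2 - (k : ℂ) / 2 + Complex.I * (r : ℂ)))⁻¹ *
      (Complex.Gamma (1 / 2 - (k : ℂ) / 2 - Complex.I * (r : ℂ)))⁻¹) := by
    unfold phiHat
    rw [hk, Complex.ofReal_zero, add_zero, div_eq_mul_inv, mul_inv, mul_inv, mul_inv]
  have hexp : ‖Complex.exp ((1 + (k : ℂ)) * (π : ℂ) * Complex.I / 2)‖ = 1 := by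
    rw [show (1 + (k : ℂ)) * (π : ℂ) * Complex.I / 2 = (((1 + k) * π / 2 : ℝ) : ℂ) * Complex.I by
      push_cast; ring]
    exact Complex.norm_exp_ofReal_mul_I _
  rw [hphi, norm_mul, norm_mul, norm_mul, norm_mul, norm_mul, norm_mul, hexp, norm_pow, norm_inv,
    norm_inv, Complex.norm_real, Complex.norm_real, Complex.norm_real, Real.norm_eq_abs,
    Real.norm_eq_abs, Real.norm_eq_abs, abs_of_pos Real.pi_pos, mul_one]
  have hs : |Real.sinh (π * r)|⁻¹ ≤ |r|⁻¹ := inv_anti₀ hr0 (abs_le_abs_sinh r)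
  have hch : |Real.cosh (2 * π * r)|⁻¹ ≤ 1 :=
    inv_le_one_of_one_le₀ ((Real.one_le_cosh _).trans (le_abs_self _))
  calc _ ≤ π ^ 2 * (3 * (C1 * C2) * |r| * (a * x) ^ ε) * (|r|⁻¹ * 1 * M * M) := by
        have g1 := (hM r hr).1
        have g2 := (hM r hr).2
        gcongr
    _ = _ := by field_simp

theorem stmt2 :
    ∀ ε c₀ : ℝ, 0 < ε → 0 < c₀ →
      ∃ C : ℝ, ∀ (k a x : ℝ) (φ : ℝ → ℝ) (r : ℝ),
        (k = 1 / 2 ∨ k = 3 / 2) → c₀ ≤ a → 2 ≤ x →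
        Measurable φ → (∀ u, 0 ≤ φ u ∧ φ u ≤ 1) →
        (∀ u, u ∉ Set.Icc (3 * a / (8 * x)) (3 * a / (2 * x)) → φ u = 0) →
        0 < |r| → |r| ≤ 1 →
        ‖phiHat k φ r‖ ≤ C * (a * x) ^ ε := by
  intro ε c₀ hε hc
  obtain ⟨C1, hC1, h1⟩ := stmt_k ε c₀ (1 / 2) hε hc (by
    rw [show π * (1 / 2) = π / 2 by ring, Real.cos_pi_div_two])
  obtain ⟨C2, hC2, h2⟩ := stmt_k ε c₀ (3 / 2) hε hc (by
    rw [show π * (3 / 2) = π / 2 + π by ring, Real.cos_add_pi, Real.cos_pi_div_two, neg_zero])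
  refine ⟨C1 + C2, ?_⟩
  intro k a x φ r hk ha hx _ hφ hsupp hr0 hr
  have hax : 0 ≤ (a * x) ^ ε := by
    have : 0 < a := hc.trans_le ha
    positivity
  rcases hk with rfl | rfl
  · refine (h1 a x φ r ha hx hφ hsupp hr0 hr).trans ?_
    exact mul_le_mul_of_nonneg_right (by linarith) hax
  · refine (h2 a x φ r ha hx hφ hsupp hr0 hr).trans ?_
    exact mul_le_mul_of_nonneg_right (by linarith) hax
end

section
/- There exists an absolute constant C such that for all a > 0, x > 0 and every φ as in the context: |φ̃(3/2)| ≤ C·(a/x)^{1/2}, |φ̃(1/2)| ≤ C·(x/a)^{1/2}, and |φ̂(i/4)| ≤ C·(x/a)^{1/2} when k = 1/2, while |φ̂(i/4)| ≤ C·(a/x)^{1/2} when k = 3/2. -/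
open Real MeasureTheory

/-- `φ̃(β) := ∫_0^∞ J_{β−1}(u) φ(u) du/u`. -/
noncomputable def phiTilde (φ : ℝ → ℝ) (β : ℂ) : ℂ :=
  ∫ u in Set.Ioi (0 : ℝ), besselJ (β - 1) u * (φ u : ℂ) / (u : ℂ)

/-- `φ̂(i/4)` in weight `k = 1/2`. -/
noncomputable def phiHatQuarterHalf (φ : ℝ → ℝ) : ℂ :=
  Complex.exp ((π : ℂ) * Complex.I / 4) *
    Complex.ofReal (∫ u in Set.Ioi (0 : ℝ), Real.cos u * φ u * u ^ (-(3 : ℝ) / 2))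

/-- `φ̂(i/4)` in weight `k = 3/2`. -/
noncomputable def phiHatQuarterThreeHalf (φ : ℝ → ℝ) : ℂ :=
  (1 / 2 : ℂ) * Complex.exp (3 * (π : ℂ) * Complex.I / 4) *
    Complex.ofReal (∫ u in Set.Ioi (0 : ℝ), Real.sin u * φ u * u ^ (-(3 : ℝ) / 2))


lemma aux_gamma_sin (j : ℕ) :
    (Nat.factorial j : ℂ) * Complex.Gamma ((j : ℂ) + 1 + (3 / 2 - 1)) =
      (Nat.factorial (2 * j + 1) : ℂ) * ((2 : ℂ) ^ (2 * j + 1))⁻¹ * (√π : ℝ) := by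
  have h := Complex.Gamma_mul_Gamma_add_half ((j : ℂ) + 1)
  have e1 : (2 : ℂ) * ((j : ℂ) + 1) = ((2 * j + 1 : ℕ) : ℂ) + 1 := by push_cast; ring
  have e2 : (1 : ℂ) - (((2 * j + 1 : ℕ) : ℂ) + 1) = -((2 * j + 1 : ℕ) : ℂ) := by ring
  rw [e1, e2, Complex.Gamma_nat_eq_factorial, Complex.Gamma_nat_eq_factorial, Complex.cpow_neg,
    Complex.cpow_natCast] at h
  rw [← h]; norm_num

lemma aux_gamma_cos (j : ℕ) :
    (Nat.factorial j : ℂ) * Complex.Gamma ((j : ℂ) + 1 + (1 / 2 - 1)) =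
      (Nat.factorial (2 * j) : ℂ) * ((2 : ℂ) ^ (2 * j))⁻¹ * (√π : ℝ) := by
  have h := Complex.Gamma_mul_Gamma_add_half ((j : ℂ) + 1 / 2)
  have e1 : (2 : ℂ) * ((j : ℂ) + 1 / 2) = ((2 * j : ℕ) : ℂ) + 1 := by push_cast; ring
  have e2 : (1 : ℂ) - (((2 * j : ℕ) : ℂ) + 1) = -((2 * j : ℕ) : ℂ) := by ring
  have e3 : (j : ℂ) + 1 / 2 + 1 / 2 = (j : ℂ) + 1 := by ring
  have e4 : (j : ℂ) + 1 + (1 / 2 - 1) = j + 1 / 2 := by ring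
  rw [e1, e2, e3, Complex.Gamma_nat_eq_factorial, Complex.Gamma_nat_eq_factorial, Complex.cpow_neg,
    Complex.cpow_natCast] at h
  rw [← h, e4, mul_comm]

lemma aux_exp_log (u : ℝ) (hu : 0 < u) : Complex.exp (Real.log (u / 2) : ℂ) = u / 2 := by
  rw [← Complex.ofReal_exp, Real.exp_log (by positivity)]; push_cast; rfl

lemma aux_J_sin (u : ℝ) (hu : 0 < u) : besselJ (3 / 2 - 1) u =
    Complex.sin u * (Complex.exp (-(Real.log (u / 2) : ℂ) / 2) / (√π : ℝ)) := by
  unfold besselJ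
  rw [← ((Complex.hasSum_sin (u : ℂ)).mul_right _).tsum_eq]
  congr 1; ext j
  have hE : Complex.exp ((2 * (j : ℂ) + (3 / 2 - 1)) * (Real.log (u / 2) : ℂ)) =
      (u / 2 : ℂ) ^ (2 * j + 1) * Complex.exp (-(Real.log (u / 2) : ℂ) / 2) := by
    rw [← aux_exp_log u hu, ← Complex.exp_nat_mul, ← Complex.exp_add]
    congr 1; push_cast; ring
  have hf : (Nat.factorial (2 * j + 1) : ℂ) ≠ 0 := by exact_mod_cast Nat.factorial_ne_zero _
  have hp : ((√π : ℝ) : ℂ) ≠ 0 := by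
    exact_mod_cast (Real.sqrt_pos.mpr Real.pi_pos).ne'
  rw [aux_gamma_sin, hE, div_pow]
  field_simp

lemma aux_J_cos (u : ℝ) (hu : 0 < u) : besselJ (1 / 2 - 1) u =
    Complex.cos u * (Complex.exp (-(Real.log (u / 2) : ℂ) / 2) / (√π : ℝ)) := by
  unfold besselJ
  rw [← ((Complex.hasSum_cos (u : ℂ)).mul_right _).tsum_eq]
  congr 1; ext j
  have hE : Complex.exp ((2 * (j : ℂ) + (1 / 2 - 1)) * (Real.log (u / 2) : ℂ)) =
      (u / 2 : ℂ) ^ (2 * j) * Complex.exp (-(Real.log (u / 2) : ℂ) / 2) := by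
    rw [← aux_exp_log u hu, ← Complex.exp_nat_mul, ← Complex.exp_add]
    congr 1; push_cast; ring
  have hf : (Nat.factorial (2 * j) : ℂ) ≠ 0 := by exact_mod_cast Nat.factorial_ne_zero _
  have hp : ((√π : ℝ) : ℂ) ≠ 0 := by
    exact_mod_cast (Real.sqrt_pos.mpr Real.pi_pos).ne'
  rw [aux_gamma_cos, hE, div_pow]
  field_simp

lemma aux_factor (u : ℝ) (hu : 0 < u) :
    ‖Complex.exp (-(Real.log (u / 2) : ℂ) / 2) / (√π : ℝ)‖ ≤ 1 / √u := by
  have e : (-(Real.log (u / 2) : ℂ) / 2) = ((-(Real.log (u / 2) / 2) : ℝ) : ℂ) := by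
    push_cast; ring
  rw [e, ← Complex.ofReal_exp, norm_div, Complex.norm_real, Complex.norm_real, Real.exp_neg,
    ← Real.log_sqrt (by positivity), Real.exp_log (by positivity), norm_of_nonneg (by positivity),
    norm_of_nonneg (by positivity), inv_eq_one_div, div_div, ← Real.sqrt_mul (by positivity)]
  apply one_div_le_one_div_of_le (by positivity)
  apply Real.sqrt_le_sqrt
  nlinarith [Real.pi_gt_three]

lemma aux_int {E : Type*} [NormedAddCommGroup E] [NormedSpace ℝ E] (F : ℝ → E) (A M : ℝ)
    (hA : 0 < A) (h0 : ∀ u, u ∉ Set.Icc A (4 * A) → F u = 0)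
    (hM : ∀ u ∈ Set.Icc A (4 * A), ‖F u‖ ≤ M) :
    ‖∫ u in Set.Ioi (0 : ℝ), F u‖ ≤ M * (3 * A) := by
  have hs : Set.Icc A (4 * A) ⊆ Set.Ioi 0 := fun u hu => lt_of_lt_of_le hA hu.1
  rw [setIntegral_eq_of_subset_of_forall_sdiff_eq_zero measurableSet_Ioi hs
    (fun u hu => h0 u hu.2)]
  have h := norm_setIntegral_le_of_norm_le_const (μ := volume) (s := Set.Icc A (4 * A))
    (by simp) hM
  rw [Real.volume_real_Icc_of_le (by linarith)] at h
  calc _ ≤ _ := h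
    _ = _ := by ring

lemma aux_rpow (u : ℝ) (hu : 0 < u) : u ^ (-(3 : ℝ) / 2) = 1 / √u / u := by
  have : -(3 : ℝ) / 2 = -(1 / 2) - 1 := by norm_num
  rw [this, Real.rpow_sub_one hu.ne', Real.rpow_neg hu.le, ← Real.sqrt_eq_rpow, inv_eq_one_div]

lemma aux_b1 (A u s f : ℝ) (hA : 0 < A) (hu : A ≤ u) (hs : s ≤ u) (hs0 : 0 ≤ s)
    (hf : f ≤ 1) (hf0 : 0 ≤ f) : s * (1 / √u) * f / u ≤ 1 / √A := by
  have hu0 : 0 < u := hA.trans_le hu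
  have : s * (1 / √u) * f / u = (s / u) * f * (1 / √u) := by ring
  rw [this]
  have h1 : s / u ≤ 1 := (div_le_one hu0).mpr hs
  have h2 : s / u * f ≤ 1 := mul_le_one₀ h1 hf0 hf
  calc _ ≤ 1 * (1 / √u) := by gcongr
    _ ≤ 1 / √A := by rw [one_mul]; gcongr

lemma aux_b2 (A u s f : ℝ) (hA : 0 < A) (hu : A ≤ u) (hs : s ≤ 1) (hs0 : 0 ≤ s)
    (hf : f ≤ 1) (hf0 : 0 ≤ f) : s * (1 / √u) * f / u ≤ 1 / √A / A := by
  have hu0 : 0 < u := hA.trans_le hu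
  have : s * (1 / √u) * f / u = (s * f) * (1 / √u / u) := by ring
  rw [this]
  have h2 : s * f ≤ 1 := mul_le_one₀ hs hf0 hf
  calc _ ≤ 1 * (1 / √u / u) := by gcongr
    _ ≤ 1 / √A / A := by rw [one_mul]; gcongr

theorem stmt4 :
    ∃ C : ℝ, ∀ (a x : ℝ) (φ : ℝ → ℝ), 0 < a → 0 < x →
      Measurable φ → (∀ u, 0 ≤ φ u ∧ φ u ≤ 1) →
      (∀ u, u ∉ Set.Icc (3 * a / (8 * x)) (3 * a / (2 * x)) → φ u = 0) →
      ‖phiTilde φ (3 / 2)‖ ≤ C * (a / x) ^ ((1 : ℝ) / 2) ∧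
      ‖phiTilde φ (1 / 2)‖ ≤ C * (x / a) ^ ((1 : ℝ) / 2) ∧
      ‖phiHatQuarterHalf φ‖ ≤ C * (x / a) ^ ((1 : ℝ) / 2) ∧
      ‖phiHatQuarterThreeHalf φ‖ ≤ C * (a / x) ^ ((1 : ℝ) / 2) := by
  refine ⟨6, fun a x φ ha hx _ hφ h0 => ?_⟩
  obtain ⟨A, hAdef⟩ : ∃ A, A = 3 * a / (8 * x) := ⟨_, rfl⟩
  have hA : 0 < A := by rw [hAdef]; positivity
  have h4 : 3 * a / (2 * x) = 4 * A := by rw [hAdef]; field_simp; norm_num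
  rw [h4, ← hAdef] at h0
  rw [← Real.sqrt_eq_rpow, ← Real.sqrt_eq_rpow]
  have hsA : 0 < √A := Real.sqrt_pos.mpr hA
  have hss : √A * √A = A := Real.mul_self_sqrt hA.le
  have B1 : 1 / √A * (3 * A) ≤ 6 * √(a / x) := by
    have e : 1 / √A * (3 * A) = 3 * √A := by
      rw [← hss, Real.sqrt_mul_self hsA.le]; field_simp
    have : √A ≤ √(a / x) := by
      apply Real.sqrt_le_sqrt
      rw [hAdef, div_le_div_iff₀ (by positivity) hx]
      nlinarith [mul_pos ha hx]
    rw [e]; linarith [Real.sqrt_nonneg (a / x)]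
  have B2 : 1 / √A / A * (3 * A) ≤ 6 * √(x / a) := by
    have e : 1 / √A / A * (3 * A) = 3 * √(A⁻¹) := by
      rw [Real.sqrt_inv]; field_simp
    have : √(A⁻¹) ≤ 2 * √(x / a) := by
      have : 2 * √(x / a) = √(4 * (x / a)) := by
        rw [Real.sqrt_mul (by norm_num), show (4 : ℝ) = 2 * 2 by norm_num,
          Real.sqrt_mul_self (by norm_num)]
      rw [this]
      apply Real.sqrt_le_sqrt
      have hxa : 0 < x / a := by positivity
      have : A⁻¹ = 8 / 3 * (x / a) := by rw [hAdef]; field_simp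
      rw [this]; linarith
    rw [e]; linarith
  have hsin : ∀ u : ℝ, 0 < u → |Real.sin u| ≤ u := fun u hu => by
    simpa [abs_of_pos hu] using Real.abs_sin_le_abs (x := u)
  refine ⟨(aux_int _ A (1 / √A) hA (fun u hu => by simp [h0 u hu]) fun u hu => ?_).trans B1,
    (aux_int _ A (1 / √A / A) hA (fun u hu => by simp [h0 u hu]) fun u hu => ?_).trans B2, ?_, ?_⟩
  · have hu0 : 0 < u := hA.trans_le hu.1
    rw [aux_J_sin u hu0, norm_div, norm_mul, norm_mul, Complex.norm_real, Complex.norm_real,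
      Real.norm_of_nonneg (hφ u).1, Real.norm_of_nonneg hu0.le, ← Complex.ofReal_sin,
      Complex.norm_real, Real.norm_eq_abs]
    refine le_trans ?_ (aux_b1 A u _ _ hA hu.1 (hsin u hu0) (abs_nonneg _) (hφ u).2 (hφ u).1)
    have := aux_factor u hu0
    have := (hφ u).1
    gcongr
  · have hu0 : 0 < u := hA.trans_le hu.1
    rw [aux_J_cos u hu0, norm_div, norm_mul, norm_mul, Complex.norm_real, Complex.norm_real,
      Real.norm_of_nonneg (hφ u).1, Real.norm_of_nonneg hu0.le, ← Complex.ofReal_cos,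
      Complex.norm_real, Real.norm_eq_abs]
    refine le_trans ?_ (aux_b2 A u _ _ hA hu.1 (Real.abs_cos_le_one u) (abs_nonneg _)
      (hφ u).2 (hφ u).1)
    have := aux_factor u hu0
    have := (hφ u).1
    gcongr
  · have e : ‖Complex.exp ((π : ℂ) * Complex.I / 4)‖ = 1 := by
      rw [show (π : ℂ) * Complex.I / 4 = ((π / 4 : ℝ) : ℂ) * Complex.I by push_cast; ring,
        Complex.norm_exp_ofReal_mul_I]
    rw [phiHatQuarterHalf, norm_mul, e, one_mul, Complex.norm_real]
    refine (aux_int _ A (1 / √A / A) hA (fun u hu => by simp [h0 u hu]) fun u hu => ?_).trans B2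
    have hu0 : 0 < u := hA.trans_le hu.1
    rw [aux_rpow u hu0, norm_mul, norm_mul, Real.norm_of_nonneg (hφ u).1, Real.norm_eq_abs,
      Real.norm_of_nonneg (by positivity)]
    refine le_trans (le_of_eq ?_) (aux_b2 A u _ _ hA hu.1 (Real.abs_cos_le_one u) (abs_nonneg _)
      (hφ u).2 (hφ u).1)
    ring
  · have e : ‖Complex.exp (3 * (π : ℂ) * Complex.I / 4)‖ = 1 := by
      rw [show 3 * (π : ℂ) * Complex.I / 4 = ((3 * π / 4 : ℝ) : ℂ) * Complex.I by push_cast; ring,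
        Complex.norm_exp_ofReal_mul_I]
    rw [phiHatQuarterThreeHalf, norm_mul, norm_mul, e, mul_one, Complex.norm_real]
    have h2 : ‖(1 / 2 : ℂ)‖ ≤ 1 := by norm_num
    refine (mul_le_of_le_one_left (norm_nonneg _) h2).trans ?_
    refine (aux_int _ A (1 / √A) hA (fun u hu => by simp [h0 u hu]) fun u hu => ?_).trans B1
    have hu0 : 0 < u := hA.trans_le hu.1
    rw [aux_rpow u hu0, norm_mul, norm_mul, Real.norm_of_nonneg (hφ u).1, Real.norm_eq_abs,
      Real.norm_of_nonneg (by positivity)]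
    refine le_trans (le_of_eq ?_) (aux_b1 A u _ _ hA hu.1 (hsin u hu0) (abs_nonneg _)
      (hφ u).2 (hφ u).1)
    ring
end

section
/- For every δ ∈ (0, 1/2) and every t₀ ∈ (0, 1/4] there exists a constant C = C(δ, t₀) such that, under the hypotheses of the context, for every t ∈ [t₀, 1/4] one has | φ̃(1 − 2t) − (2^{2t}(2^{2t} − 1) / (2t · Γ(1 − 2t))) · (x/a)^{2t} | ≤ C·( a^{−2t} x^{2t−δ} + 1 ). -/
open Real MeasureTheory

lemma one_le_Gamma_aux {s : ℝ} (h0 : 0 < s) (h1 : s ≤ 1) : 1 ≤ Real.Gamma s := by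
  rcases h1.eq_or_lt with h | h
  · rw [h, Real.Gamma_one]
  have hc := Real.convexOn_Gamma
  have := hc.slope_mono_adjacent (x := s) (y := 1) (z := 2) h0 (by norm_num) h (by norm_num)
  rw [Real.Gamma_one, Real.Gamma_two] at this
  have h2 : (1 - Real.Gamma s) / (1 - s) ≤ 0 := by simpa using this
  by_contra hcon
  push Not at hcon
  have : 0 < (1 - Real.Gamma s) / (1 - s) := div_pos (by linarith) (by linarith)
  linarith

lemma half_le_Gamma_aux {t : ℝ} (h0 : 0 < t) (h1 : t ≤ 1/4) (j : ℕ) :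
    1/2 ≤ Real.Gamma ((j : ℝ) + 1 - 2*t) := by
  have h : ∀ j : ℕ, 1/2 ≤ Real.Gamma ((j : ℝ) + 2 - 2*t) := by
    intro j
    induction j with
    | zero =>
      have e : ((0:ℕ) : ℝ) + 2 - 2*t = (1 - 2*t) + 1 := by push_cast; ring
      rw [e, Real.Gamma_add_one (by linarith)]
      have := one_le_Gamma_aux (s := 1 - 2*t) (by linarith) (by linarith)
      nlinarith
    | succ j ih =>
      have e : ((j+1:ℕ) : ℝ) + 2 - 2*t = ((j:ℝ) + 2 - 2*t) + 1 := by push_cast; ring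
      have hj : (0:ℝ) ≤ j := Nat.cast_nonneg j
      rw [e, Real.Gamma_add_one (by linarith)]
      nlinarith
  cases j with
  | zero =>
    have := one_le_Gamma_aux (s := 1 - 2*t) (by linarith) (by linarith)
    have e : ((0:ℕ) : ℝ) + 1 - 2*t = 1 - 2*t := by push_cast; ring
    rw [e]; linarith
  | succ j =>
    have e : ((j+1:ℕ) : ℝ) + 1 - 2*t = (j:ℝ) + 2 - 2*t := by push_cast; ring
    rw [e]; exact h j

/-- The real terms of the Bessel series. -/
noncomputable def bTerm (t : ℝ) (j : ℕ) (u : ℝ) : ℝ :=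
  (-1) ^ j / ((Nat.factorial j : ℝ) * Real.Gamma ((j : ℝ) + 1 - 2*t)) *
    (u/2) ^ (2 * (j:ℝ) - 2*t)

lemma besselJ_eq_aux (t : ℝ) {u : ℝ} (hu : 0 < u) :
    besselJ (-(2 * (t:ℂ))) u = ((∑' j, bTerm t j u : ℝ) : ℂ) := by
  rw [Complex.ofReal_tsum]
  unfold besselJ
  congr 1
  ext j
  unfold bTerm
  rw [Real.rpow_def_of_pos (by linarith)]
  have e : (j : ℂ) + 1 + -(2 * (t:ℂ)) = (((j:ℝ) + 1 - 2*t : ℝ) : ℂ) := by push_cast; ring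
  rw [e, Complex.Gamma_ofReal]
  push_cast
  congr 2
  ring

lemma bTerm_bound {t : ℝ} (h0 : 0 < t) (h1 : t ≤ 1/4) (j : ℕ) {u : ℝ} (hu : 0 < u) :
    ‖bTerm t j u‖ ≤ 2 * (1 / (Nat.factorial j : ℝ)) * (u/2) ^ (2 * (j:ℝ) - 2*t) := by
  unfold bTerm
  have hG := half_le_Gamma_aux h0 h1 j
  have hp : 0 ≤ (u/2) ^ (2 * (j:ℝ) - 2*t) := by positivity
  have hf : (0:ℝ) < (Nat.factorial j : ℝ) := by positivity
  rw [norm_mul, Real.norm_of_nonneg hp]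
  apply mul_le_mul_of_nonneg_right _ hp
  rw [norm_div, norm_pow, norm_neg, norm_one, one_pow, Real.norm_of_nonneg (by positivity)]
  rw [mul_one_div, div_le_div_iff₀ (by positivity) hf]
  nlinarith

lemma bessel_cont {t : ℝ} (h0 : 0 < t) (h1 : t ≤ 1/4) {A : ℝ} (hA : 0 < A) :
    ContinuousOn (fun u => ∑' j, bTerm t j u) (Set.Icc A 2) := by
  apply continuousOn_tsum (u := fun j : ℕ => 2 * (1 / (Nat.factorial j : ℝ)) * (A/2) ^ (-(2*t)))
  · intro j
    unfold bTerm
    apply ContinuousOn.mul continuousOn_const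
    apply ContinuousOn.rpow_const (by fun_prop)
    intro u hu
    left
    have : 0 < u := lt_of_lt_of_le hA hu.1
    positivity
  · apply Summable.mul_right
    apply Summable.mul_left
    simpa using Real.summable_pow_div_factorial 1
  · intro j u hu
    have hu0 : 0 < u := lt_of_lt_of_le hA hu.1
    refine (bTerm_bound h0 h1 j hu0).trans ?_
    apply mul_le_mul_of_nonneg_left _ (by positivity)
    calc (u/2) ^ (2 * (j:ℝ) - 2*t) ≤ (u/2) ^ (-(2*t)) := by
          apply Real.rpow_le_rpow_of_exponent_ge (by positivity) (by linarith [hu.2])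
          have hj : (0:ℝ) ≤ j := Nat.cast_nonneg j
          linarith
      _ ≤ (A/2) ^ (-(2*t)) := by
          apply Real.rpow_le_rpow_of_nonpos (by positivity) (by linarith [hu.1]) (by linarith)

lemma bessel_rem {t : ℝ} (h0 : 0 < t) (h1 : t ≤ 1/4) {u : ℝ} (hu : 0 < u) (hu2 : u ≤ 2) :
    |(∑' j, bTerm t j u) - (u/2) ^ (-(2*t)) / Real.Gamma (1 - 2*t)| ≤ 4 * u := by
  have hexp : HasSum (fun j : ℕ => 1 / (Nat.factorial j : ℝ)) (Real.exp 1) := by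
    have := NormedSpace.expSeries_div_hasSum_exp (𝔸 := ℝ) 1
    rw [← Real.exp_eq_exp_ℝ] at this
    simpa using this
  have hS : Summable (fun j : ℕ => 1 / (Nat.factorial j : ℝ)) := hexp.summable
  have hS1 : Summable (fun j : ℕ => 1 / (Nat.factorial (j+1) : ℝ)) :=
    (summable_nat_add_iff 1).2 hS
  have hb : ∀ j : ℕ, ‖bTerm t (j+1) u‖ ≤ (1 / (Nat.factorial (j+1) : ℝ)) * u := by
    intro j
    refine (bTerm_bound h0 h1 (j+1) hu).trans ?_
    have : (u/2) ^ (2 * ((j+1:ℕ):ℝ) - 2*t) ≤ u/2 := by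
      calc _ ≤ (u/2) ^ (1:ℝ) := by
            apply Real.rpow_le_rpow_of_exponent_ge (by positivity) (by linarith)
            have hj : (0:ℝ) ≤ j := Nat.cast_nonneg j
            push_cast; linarith
        _ = u/2 := Real.rpow_one _
    have h3 : 0 ≤ 1 / (Nat.factorial (j+1) : ℝ) := by positivity
    nlinarith
  have hsum1 : Summable (fun j => bTerm t (j+1) u) :=
    Summable.of_norm_bounded (hS1.mul_right u) hb
  have hsum : Summable (fun j => bTerm t j u) := (summable_nat_add_iff 1).1 hsum1
  rw [hsum.tsum_eq_zero_add]
  have e0 : bTerm t 0 u = (u/2) ^ (-(2*t)) / Real.Gamma (1 - 2*t) := by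
    unfold bTerm
    simp only [pow_zero, Nat.factorial_zero, Nat.cast_one, Nat.cast_zero, one_mul, mul_zero,
      zero_add, zero_sub]
    ring
  rw [e0, add_sub_cancel_left, ← Real.norm_eq_abs]
  refine (tsum_of_norm_bounded (hS1.mul_right u).hasSum hb).trans ?_
  rw [tsum_mul_right]
  apply mul_le_mul_of_nonneg_right _ hu.le
  have := hS.tsum_eq_zero_add
  rw [hexp.tsum_eq] at this
  have h4 := Real.exp_one_lt_d9
  simp at this ⊢
  linarith

/-- Abstract form: real integrals. -/
lemma core {t : ℝ} (h0 : 0 < t) (h1 : t ≤ 1/4) {A B C D : ℝ} (hA : 0 < A) (hAB : A ≤ B)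
    (hBC : B ≤ C) (hCD : C ≤ D) (hD : D ≤ 2) {φ : ℝ → ℝ} (hφ : Continuous φ)
    (h01 : ∀ u, 0 ≤ φ u ∧ φ u ≤ 1) (hone : ∀ u, B ≤ u → u ≤ C → φ u = 1) :
    |(∫ u in A..D, (∑' j, bTerm t j u) * φ u / u) -
        2 ^ (2*t) / (2 * t * Real.Gamma (1 - 2*t)) * (B ^ (-(2*t)) - C ^ (-(2*t)))| ≤
      (4 + (A/2) ^ (-(2*t)) / A) * (B - A) + 4 * (C - B) +
        (4 + (C/2) ^ (-(2*t)) / C) * (D - C) := by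
  set G := Real.Gamma (1 - 2*t) with hG
  have hG1 : 1 ≤ G := one_le_Gamma_aux (by linarith) (by linarith)
  have hB : 0 < B := by linarith
  have hC : 0 < C := by linarith
  have hDp : 0 < D := by linarith
  set f : ℝ → ℝ := fun u => (∑' j, bTerm t j u) * φ u / u with hf
  have hcont : ContinuousOn f (Set.Icc A D) := by
    apply ContinuousOn.div
    · exact ((bessel_cont h0 h1 hA).mono (Set.Icc_subset_Icc le_rfl hD)).mul hφ.continuousOn
    · exact continuousOn_id
    · intro u hu; have := hu.1; exact (by linarith : 0 < u).ne'
  have hint : ∀ p q, A ≤ p → p ≤ q → q ≤ D → IntervalIntegrable f volume p q := by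
    intro p q h1 h2 h3
    apply ContinuousOn.intervalIntegrable
    rw [Set.uIcc_of_le h2]
    exact hcont.mono (Set.Icc_subset_Icc h1 h3)
  rw [← intervalIntegral.integral_add_adjacent_intervals (hint A B le_rfl hAB (by linarith))
      (hint B D hAB (by linarith) le_rfl),
    ← intervalIntegral.integral_add_adjacent_intervals (hint B C hAB hBC hCD)
      (hint C D (by linarith) hCD le_rfl)]
  -- side bound
  have side : ∀ p q, A ≤ p → p ≤ q → q ≤ D →
      |∫ u in p..q, f u| ≤ (4 + (p/2) ^ (-(2*t)) / p) * (q - p) := by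
    intro p q hp hpq hq
    have hp0 : 0 < p := by linarith
    have := intervalIntegral.norm_integral_le_of_norm_le_const (f := f) (a := p) (b := q)
      (C := 4 + (p/2) ^ (-(2*t)) / p) ?_
    · rwa [Real.norm_eq_abs, abs_of_nonneg (by linarith : 0 ≤ q - p)] at this
    intro u hu
    rw [Set.uIoc_of_le hpq] at hu
    have hu0 : 0 < u := by linarith [hu.1]
    have hr := bessel_rem h0 h1 hu0 (by linarith [hu.2])
    rw [← hG] at hr
    have hm : (u/2) ^ (-(2*t)) / G ≤ (p/2) ^ (-(2*t)) := by
      calc _ ≤ (u/2) ^ (-(2*t)) := div_le_self (by positivity) hG1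
        _ ≤ _ := Real.rpow_le_rpow_of_nonpos (by positivity) (by linarith [hu.1]) (by linarith)
    have hm0 : 0 ≤ (u/2) ^ (-(2*t)) / G := by positivity
    have hJ : |∑' j, bTerm t j u| ≤ 4 * u + (p/2) ^ (-(2*t)) := by
      rw [abs_le] at hr ⊢
      constructor <;> linarith [hr.1, hr.2]
    have hpp : 0 ≤ (p/2) ^ (-(2*t)) := by positivity
    rw [hf]
    simp only
    rw [norm_div, norm_mul, Real.norm_eq_abs, Real.norm_of_nonneg (h01 u).1,
      Real.norm_of_nonneg hu0.le, div_le_iff₀ hu0]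
    calc |∑' j, bTerm t j u| * φ u ≤ |∑' j, bTerm t j u| * 1 :=
          mul_le_mul_of_nonneg_left (h01 u).2 (abs_nonneg _)
      _ ≤ 4 * u + (p/2) ^ (-(2*t)) := by linarith
      _ = 4 * u + (p/2) ^ (-(2*t)) / p * p := by field_simp
      _ ≤ 4 * u + (p/2) ^ (-(2*t)) / p * u := by
          have : 0 ≤ (p/2) ^ (-(2*t)) / p := by positivity
          have := mul_le_mul_of_nonneg_left hu.1.le this
          linarith
      _ = _ := by ring
  have s1 := side A B le_rfl hAB (by linarith)
  have s2 := side C D (by linarith) hCD le_rfl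
  -- middle
  have hmain : ∫ u in B..C, (u/2) ^ (-(2*t)) / G / u =
      2 ^ (2*t) / (2 * t * G) * (B ^ (-(2*t)) - C ^ (-(2*t))) := by
    have e : ∫ u in B..C, (u/2) ^ (-(2*t)) / G / u =
        ∫ u in B..C, (2 ^ (2*t) / G) * u ^ (-(2*t) - 1) := by
      apply intervalIntegral.integral_congr
      intro u hu
      rw [Set.uIcc_of_le hBC] at hu
      have hu0 : 0 < u := by linarith [hu.1]
      simp only
      rw [Real.div_rpow hu0.le (by norm_num), Real.rpow_sub_one hu0.ne',
        Real.rpow_neg (by norm_num : (0:ℝ) ≤ 2)]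
      field_simp
    rw [e, intervalIntegral.integral_const_mul, integral_rpow]
    · have : -(2*t) - 1 + 1 = -(2*t) := by ring
      rw [this]
      field_simp
      ring
    · right
      constructor
      · linarith
      · rw [Set.uIcc_of_le hBC]
        intro h
        linarith [h.1]
  have hmint : IntervalIntegrable (fun u => (u/2) ^ (-(2*t)) / G / u) volume B C := by
    apply ContinuousOn.intervalIntegrable
    rw [Set.uIcc_of_le hBC]
    apply ContinuousOn.div
    · apply ContinuousOn.div_const
      apply ContinuousOn.rpow_const (by fun_prop)
      intro u hu
      left
      have := hu.1
      have : 0 < u := by linarith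
      positivity
    · exact continuousOn_id
    · intro u hu; have := hu.1; exact (by linarith : 0 < u).ne'
  have mid : |(∫ u in B..C, f u) -
      2 ^ (2*t) / (2 * t * G) * (B ^ (-(2*t)) - C ^ (-(2*t)))| ≤ 4 * (C - B) := by
    rw [← hmain, ← intervalIntegral.integral_sub (hint B C hAB hBC hCD) hmint]
    have := intervalIntegral.norm_integral_le_of_norm_le_const
      (f := fun u => f u - (u/2) ^ (-(2*t)) / G / u) (a := B) (b := C) (C := 4) ?_
    · rwa [Real.norm_eq_abs, abs_of_nonneg (by linarith : 0 ≤ C - B)] at this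
    intro u hu
    rw [Set.uIoc_of_le hBC] at hu
    have hu0 : 0 < u := by linarith [hu.1]
    have hr := bessel_rem h0 h1 hu0 (by linarith [hu.2])
    rw [← hG] at hr
    rw [hf]
    simp only
    rw [hone u hu.1.le hu.2, mul_one, ← sub_div, norm_div, Real.norm_eq_abs,
      Real.norm_of_nonneg hu0.le, div_le_iff₀ hu0]
    exact hr
  rw [abs_le] at s1 s2 mid ⊢
  constructor <;> linarith [s1.1, s1.2, s2.1, s2.2, mid.1, mid.2]

lemma phiTilde_eq_aux (t : ℝ) {A D : ℝ} (hA : 0 < A) (hAD : A ≤ D) {φ : ℝ → ℝ}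
    (hl : ∀ u, u ≤ A → φ u = 0) (hr : ∀ u, D ≤ u → φ u = 0) :
    phiTilde φ (1 - 2 * (t:ℂ)) = ((∫ u in A..D, (∑' j, bTerm t j u) * φ u / u : ℝ) : ℂ) := by
  unfold phiTilde
  rw [← intervalIntegral.integral_ofReal, intervalIntegral.integral_of_le hAD]
  have hsub : Set.Ioc A D ⊆ Set.Ioi 0 := fun u hu => lt_trans hA hu.1
  rw [setIntegral_eq_of_subset_of_forall_sdiff_eq_zero measurableSet_Ioi hsub]
  · apply setIntegral_congr_fun measurableSet_Ioc
    intro u hu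
    have e : (1 - 2 * (t:ℂ)) - 1 = -(2 * (t:ℂ)) := by ring
    simp only
    rw [e, besselJ_eq_aux t (hsub hu)]
    push_cast
    rfl
  · intro u hu
    have : φ u = 0 := by
      by_cases h : u ≤ A
      · exact hl u h
      · apply hr
        by_contra h2
        push Not at h h2
        exact hu.2 ⟨h, h2.le⟩
    rw [this]; simp

theorem stmt6 :
    ∀ δ t₀ : ℝ, 0 < δ → δ < 1 / 2 → 0 < t₀ → t₀ ≤ 1 / 4 →
      ∃ C : ℝ, ∀ (x a T T' : ℝ) (φ : ℝ → ℝ) (t : ℝ),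
        (3 : ℝ) ^ (1 / δ) ≤ x → T = x ^ (1 - δ) → T' = x ^ (1 - 2 * δ) →
        0 < a → a / (x - T) ≤ 1.999 →
        ContDiff ℝ 1 φ → (∀ u, 0 ≤ φ u ∧ φ u ≤ 1) →
        (∀ u, a / (2 * x) ≤ u → u ≤ a / x → φ u = 1) →
        (∀ u, u ≤ a / (2 * x + 2 * T) → φ u = 0) →
        (∀ u, a / (x - T) ≤ u → φ u = 0) →
        (∀ u ∈ Set.Ioo (a / (2 * x + 2 * T - 2 * T')) (a / (2 * x + 2 * T')),
          deriv φ u = 2 * x * (x + T) / (a * T)) →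
        (∀ u ∈ Set.Ioo (a / (x - T')) (a / (x - T + T')),
          deriv φ u = -(x * (x - T)) / (a * T)) →
        (∀ u ∈ Set.Ioo (a / (2 * x + 2 * T)) (a / (2 * x + 2 * T - 2 * T')) ∪
            Set.Ioo (a / (2 * x + 2 * T')) (a / (2 * x)),
          0 ≤ deriv φ u ∧ deriv φ u ≤ 4 * x * (x + T) / (a * T)) →
        (∀ u ∈ Set.Ioo (a / x) (a / (x - T')) ∪ Set.Ioo (a / (x - T + T')) (a / (x - T)),
          -(2 * x * (x - T)) / (a * T) ≤ deriv φ u ∧ deriv φ u ≤ 0) →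
        (∀ u, u ∉ Set.Icc (a / (2 * x + 2 * T)) (a / (2 * x)) ∪
            Set.Icc (a / x) (a / (x - T)) → deriv φ u = 0) →
        t₀ ≤ t → t ≤ 1 / 4 →
        ‖phiTilde φ (1 - 2 * (t : ℂ)) -
            Complex.ofReal ((2 : ℝ) ^ (2 * t) * ((2 : ℝ) ^ (2 * t) - 1) /
              (2 * t * Real.Gamma (1 - 2 * t)) * (x / a) ^ (2 * t))‖ ≤
          C * (a ^ (-(2 * t)) * x ^ (2 * t - δ) + 1) := by
  intro δ t₀ hδ hδ2 ht₀ ht₀4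
  refine ⟨20, ?_⟩
  intro x a T T' φ t hx hT hT' ha haT hφ h01 hone hl hr _ _ _ _ _ ht ht4
  have ht0 : 0 < t := by linarith
  have hx0 : 0 < x := lt_of_lt_of_le (by positivity) hx
  have hxδ : 3 ≤ x ^ δ := by
    have := Real.rpow_le_rpow (by positivity) hx hδ.le
    rwa [← Real.rpow_mul (by norm_num), one_div_mul_cancel hδ.ne', Real.rpow_one] at this
  have hTx : T = x * x ^ (-δ) := by
    rw [hT, sub_eq_add_neg, Real.rpow_add hx0, Real.rpow_one]
  have hδpos : 0 < x ^ (-δ) := by positivity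
  have hδ3 : x ^ (-δ) ≤ 1/3 := by
    rw [Real.rpow_neg hx0.le, one_div]
    exact inv_anti₀ (by norm_num) hxδ
  have hT0 : 0 < T := by rw [hTx]; positivity
  have hT3 : T ≤ x / 3 := by rw [hTx]; nlinarith
  set r := x ^ (-δ) with hrdef
  have hA : 0 < a / (2*x + 2*T) := by positivity
  have hAB : a / (2*x + 2*T) ≤ a / (2*x) := by
    apply div_le_div_of_nonneg_left ha.le <;> linarith
  have hBC : a / (2*x) ≤ a / x := by
    apply div_le_div_of_nonneg_left ha.le <;> linarith
  have hCD : a / x ≤ a / (x - T) := by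
    apply div_le_div_of_nonneg_left ha.le <;> linarith
  have hD : a / (x - T) ≤ 2 := by norm_num at haT ⊢; linarith
  rw [phiTilde_eq_aux t hA (by linarith) hl hr, ← Complex.ofReal_sub, Complex.norm_real,
    Real.norm_eq_abs]
  have key := core ht0 ht4 hA hAB hBC hCD hD hφ.continuous h01 hone
  have inv1 : ∀ y : ℝ, 0 < y → (a / y) ^ (-(2*t)) = (y / a) ^ (2*t) := by
    intro y hy
    rw [Real.rpow_neg (by positivity), ← Real.inv_rpow (by positivity), inv_div]
  set X := (x / a) ^ (2*t) with hX
  have hX0 : 0 < X := by positivity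
  have eB : (a / (2*x)) ^ (-(2*t)) = 2 ^ (2*t) * X := by
    rw [inv1 _ (by positivity), mul_div_assoc, Real.mul_rpow (by norm_num) (by positivity)]
  have eC : (a / x) ^ (-(2*t)) = X := inv1 _ hx0
  have emain : 2 ^ (2*t) / (2 * t * Real.Gamma (1 - 2*t)) *
      ((a / (2*x)) ^ (-(2*t)) - (a / x) ^ (-(2*t))) =
      (2 : ℝ) ^ (2 * t) * ((2 : ℝ) ^ (2 * t) - 1) / (2 * t * Real.Gamma (1 - 2 * t)) * X := by
    rw [eB, eC]; ring
  rw [emain] at key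
  refine key.trans ?_
  have eX : a ^ (-(2*t)) * x ^ (2*t - δ) = X * r := by
    rw [hX, hrdef, Real.div_rpow hx0.le ha.le, Real.rpow_neg ha.le, sub_eq_add_neg,
      Real.rpow_add hx0]
    ring
  rw [eX]
  have pw : ∀ c : ℝ, 1 ≤ c → c ≤ 16 → c ^ (2*t) ≤ 4 := by
    intro c hc hc2
    calc c ^ (2*t) ≤ c ^ (1/2 : ℝ) := Real.rpow_le_rpow_of_exponent_le hc (by linarith)
      _ ≤ 16 ^ (1/2 : ℝ) := Real.rpow_le_rpow (by linarith) hc2 (by norm_num)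
      _ = 4 := by
        rw [← Real.sqrt_eq_rpow, show (16:ℝ) = 4^2 by norm_num]
        exact Real.sqrt_sq (by norm_num)
  have bA : (a / (2*x + 2*T) / 2) ^ (-(2*t)) ≤ 4 * X := by
    rw [div_div, inv1 _ (by positivity)]
    calc ((2*x + 2*T) * 2 / a) ^ (2*t) ≤ (16 * (x / a)) ^ (2*t) := by
          apply Real.rpow_le_rpow (by positivity) _ (by linarith)
          rw [← mul_div_assoc]
          apply div_le_div_of_nonneg_right _ ha.le
          linarith
      _ = 16 ^ (2*t) * X := Real.mul_rpow (by norm_num) (by positivity)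
      _ ≤ 4 * X := mul_le_mul_of_nonneg_right (pw 16 (by norm_num) le_rfl) hX0.le
  have bC : (a / x / 2) ^ (-(2*t)) ≤ 4 * X := by
    rw [div_div, inv1 _ (by positivity)]
    calc (x * 2 / a) ^ (2*t) = (2 * (x / a)) ^ (2*t) := by congr 1; ring
      _ = 2 ^ (2*t) * X := Real.mul_rpow (by norm_num) (by positivity)
      _ ≤ 4 * X := mul_le_mul_of_nonneg_right (pw 2 (by norm_num) (by norm_num)) hX0.le
  have l1 : (a / (2*x) - a / (2*x + 2*T)) / (a / (2*x + 2*T)) = r := by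
    rw [hTx]; field_simp; ring
  have hxT : 0 < x - T := by linarith
  have l2 : (a / (x - T) - a / x) / (a / x) ≤ 2 * r := by
    have : (a / (x - T) - a / x) / (a / x) = T / (x - T) := by
      field_simp; ring
    rw [this, div_le_iff₀ hxT]
    have : T = x * r := hTx
    nlinarith
  have m1 : (a / (2*x + 2*T) / 2) ^ (-(2*t)) / (a / (2*x + 2*T)) * (a / (2*x) - a / (2*x + 2*T))
      ≤ 4 * X * r := by
    rw [div_mul_eq_mul_div, mul_div_assoc, l1]
    exact mul_le_mul_of_nonneg_right bA hδpos.le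
  have m2 : (a / x / 2) ^ (-(2*t)) / (a / x) * (a / (x - T) - a / x) ≤ 4 * X * (2 * r) := by
    rw [div_mul_eq_mul_div, mul_div_assoc]
    apply mul_le_mul bC l2 _ (by positivity)
    apply div_nonneg (by linarith) (by positivity)
  have hXr : 0 ≤ X * r := by positivity
  nlinarith
end

section
/- For every δ ∈ (0, 1/2) there exists a constant C = C(δ) such that, under the hypotheses of the context: for k = 1/2 one has | φ̂(i/4) − 2 e^{πi/4} (√2 − 1) (x/a)^{1/2} | ≤ C·( x^{−δ} (x/a)^{1/2} + 1 ), and for k = 3/2 one has | φ̂(i/4) − e^{3πi/4} (1 − 1/√2) (a/x)^{1/2} | ≤ C·( x^{−δ} (a/x)^{1/2} + 1 ). -/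
open Real MeasureTheory

lemma aux_pow (c : ℝ) (hc : 0 < c) : c ^ (-(1 : ℝ) / 2) = √(c⁻¹) := by
  rw [Real.sqrt_eq_rpow, Real.inv_rpow hc.le, ← Real.rpow_neg hc.le]
  norm_num

lemma aux_ii (c d e : ℝ) (hc : 0 < c) (hcd : c ≤ d) :
    IntervalIntegrable (fun u : ℝ => u ^ e) volume c d := by
  apply intervalIntegral.intervalIntegrable_rpow
  right
  rw [Set.uIcc_of_le hcd]
  intro h
  linarith [h.1]

lemma aux_J (c d : ℝ) (hc : 0 < c) (hcd : c ≤ d) :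
    ∫ u in c..d, u ^ (-(3 : ℝ) / 2) = 2 * (√(c⁻¹) - √(d⁻¹)) := by
  rw [integral_rpow]
  · rw [show -(3 : ℝ) / 2 + 1 = -(1 : ℝ) / 2 by norm_num, aux_pow c hc,
      aux_pow d (hc.trans_le hcd)]
    ring
  · right
    refine ⟨by norm_num, ?_⟩
    rw [Set.uIcc_of_le hcd]
    intro h
    linarith [h.1]

lemma aux_K (c d : ℝ) (hc : 0 < c) (hcd : c ≤ d) :
    ∫ u in c..d, u ^ (-(1 : ℝ) / 2) = 2 * (√d - √c) := by
  rw [integral_rpow]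
  · rw [show -(1 : ℝ) / 2 + 1 = (1 : ℝ) / 2 by norm_num, ← Real.sqrt_eq_rpow,
      ← Real.sqrt_eq_rpow]
    ring
  · right
    refine ⟨by norm_num, ?_⟩
    rw [Set.uIcc_of_le hcd]
    intro h
    linarith [h.1]

lemma aux_restrict (f φ : ℝ → ℝ) (p s : ℝ) (hp : 0 < p) (hps : p ≤ s)
    (h0 : ∀ u, u ≤ p → φ u = 0) (h1 : ∀ u, s ≤ u → φ u = 0) :
    ∫ u in Set.Ioi (0 : ℝ), f u * φ u * u ^ (-(3 : ℝ) / 2) =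
      ∫ u in p..s, f u * φ u * u ^ (-(3 : ℝ) / 2) := by
  rw [intervalIntegral.integral_of_le hps]
  apply setIntegral_eq_of_subset_of_forall_sdiff_eq_zero measurableSet_Ioi
  · intro u hu
    exact hp.trans hu.1
  · intro u hu
    have : φ u = 0 := by
      by_cases h : u ≤ p
      · exact h0 u h
      · apply h1
        by_contra h2
        exact hu.2 ⟨not_le.mp h, (not_le.mp h2).le⟩
    simp [this]

lemma aux_int_s8 (f φ : ℝ → ℝ) (hf : Continuous f) (hφ : Continuous φ) (c d : ℝ) (hc : 0 < c)
    (hcd : c ≤ d) :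
    IntervalIntegrable (fun u => f u * φ u * u ^ (-(3 : ℝ) / 2)) volume c d :=
  (aux_ii c d _ hc hcd).continuousOn_mul (hf.mul hφ).continuousOn

lemma aux_edge (φ : ℝ → ℝ) (hφ : ∀ u, 0 ≤ φ u ∧ φ u ≤ 1) (c d : ℝ) (hc : 0 < c)
    (hcd : c ≤ d) :
    |∫ u in c..d, Real.cos u * φ u * u ^ (-(3 : ℝ) / 2)| ≤ 2 * (√(c⁻¹) - √(d⁻¹)) := by
  rw [← aux_J c d hc hcd, ← Real.norm_eq_abs]
  apply intervalIntegral.norm_integral_le_of_norm_le hcd _ (aux_ii c d _ hc hcd)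
  refine Filter.Eventually.of_forall fun u hu => ?_
  have hu0 : 0 < u := hc.trans hu.1
  have hpos : 0 < u ^ (-(3 : ℝ) / 2) := Real.rpow_pos_of_pos hu0 _
  rw [Real.norm_eq_abs, abs_mul, abs_mul, abs_of_pos hpos, abs_of_nonneg (hφ u).1]
  have h1 := Real.abs_cos_le_one u
  have h2 : |Real.cos u| * φ u ≤ 1 := mul_le_one₀ h1 (hφ u).1 (hφ u).2
  nlinarith

lemma aux_sin (φ : ℝ → ℝ) (hφ : ∀ u, 0 ≤ φ u ∧ φ u ≤ 1) (c d : ℝ) (hc : 0 < c)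
    (hcd : c ≤ d) :
    |∫ u in c..d, Real.sin u * φ u * u ^ (-(3 : ℝ) / 2)| ≤ 2 * (√d - √c) := by
  rw [← aux_K c d hc hcd, ← Real.norm_eq_abs]
  apply intervalIntegral.norm_integral_le_of_norm_le hcd _ (aux_ii c d _ hc hcd)
  refine Filter.Eventually.of_forall fun u hu => ?_
  have hu0 : 0 < u := hc.trans hu.1
  have hpos : 0 < u ^ (-(3 : ℝ) / 2) := Real.rpow_pos_of_pos hu0 _
  rw [Real.norm_eq_abs, abs_mul, abs_mul, abs_of_pos hpos, abs_of_nonneg (hφ u).1]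
  have h1 : |Real.sin u| ≤ u := by
    have := Real.abs_sin_le_abs (x := u)
    rwa [abs_of_pos hu0] at this
  have h2 : |Real.sin u| * φ u ≤ u := by
    nlinarith [hφ u, abs_nonneg (Real.sin u)]
  have h3 : u ^ (-(1 : ℝ) / 2) = u * u ^ (-(3 : ℝ) / 2) := by
    nth_rewrite 2 [← Real.rpow_one u]
    rw [← Real.rpow_add hu0]
    norm_num
  rw [h3]
  exact mul_le_mul_of_nonneg_right h2 hpos.le

lemma aux_mid (φ : ℝ → ℝ) (q r : ℝ) (hq : 0 < q) (hqr : q ≤ r) (hr : r ≤ 2)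
    (h1 : ∀ u, q ≤ u → u ≤ r → φ u = 1) :
    |(∫ u in q..r, Real.cos u * φ u * u ^ (-(3 : ℝ) / 2)) - 2 * (√(q⁻¹) - √(r⁻¹))| ≤ 4 := by
  have e1 : (∫ u in q..r, Real.cos u * φ u * u ^ (-(3 : ℝ) / 2)) =
      ∫ u in q..r, Real.cos u * 1 * u ^ (-(3 : ℝ) / 2) := by
    apply intervalIntegral.integral_congr
    intro u hu
    rw [Set.uIcc_of_le hqr] at hu
    simp only [h1 u hu.1 hu.2]
  rw [e1, ← aux_J q r hq hqr, ← intervalIntegral.integral_sub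
    (aux_int_s8 Real.cos (fun _ => 1) Real.continuous_cos continuous_const q r hq hqr)
    (aux_ii q r _ hq hqr), ← Real.norm_eq_abs]
  have := intervalIntegral.norm_integral_le_of_norm_le_const (a := q) (b := r) (C := 2)
    (f := fun u => Real.cos u * 1 * u ^ (-(3 : ℝ) / 2) - u ^ (-(3 : ℝ) / 2)) ?_
  · refine this.trans ?_
    rw [abs_of_nonneg (by linarith)]
    linarith
  · intro u hu
    rw [Set.uIoc_of_le hqr] at hu
    have hu0 : 0 < u := hq.trans hu.1
    have hpos : 0 < u ^ (-(3 : ℝ) / 2) := Real.rpow_pos_of_pos hu0 _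
    have h3 : u ^ 2 * u ^ (-(3 : ℝ) / 2) = √u := by
      rw [← Real.rpow_natCast, ← Real.rpow_add hu0, Real.sqrt_eq_rpow]
      norm_num
    have h4 : √u ≤ 2 := by
      rw [Real.sqrt_le_left (by norm_num)]
      linarith [hu.2]
    rw [show Real.cos u * 1 * u ^ (-(3 : ℝ) / 2) - u ^ (-(3 : ℝ) / 2) =
      -((1 - Real.cos u) * u ^ (-(3 : ℝ) / 2)) by ring, norm_neg, Real.norm_eq_abs,
      abs_of_nonneg (mul_nonneg (by linarith [Real.cos_le_one u]) hpos.le)]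
    have h5 := Real.one_sub_sq_div_two_le_cos (x := u)
    have h6 : 1 - Real.cos u ≤ u ^ 2 := by nlinarith [sq_nonneg u]
    calc _ ≤ u ^ 2 * u ^ (-(3 : ℝ) / 2) := mul_le_mul_of_nonneg_right h6 hpos.le
      _ ≤ 2 := by rw [h3]; exact h4

theorem stmt8 :
    ∀ δ : ℝ, 0 < δ → δ < 1 / 2 →
      ∃ C : ℝ, ∀ (x a T T' : ℝ) (φ : ℝ → ℝ),
        (3 : ℝ) ^ (1 / δ) ≤ x → T = x ^ (1 - δ) → T' = x ^ (1 - 2 * δ) →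
        0 < a → a / (x - T) ≤ 1.999 →
        ContDiff ℝ 1 φ → (∀ u, 0 ≤ φ u ∧ φ u ≤ 1) →
        (∀ u, a / (2 * x) ≤ u → u ≤ a / x → φ u = 1) →
        (∀ u, u ≤ a / (2 * x + 2 * T) → φ u = 0) →
        (∀ u, a / (x - T) ≤ u → φ u = 0) →
        (∀ u ∈ Set.Ioo (a / (2 * x + 2 * T - 2 * T')) (a / (2 * x + 2 * T')),
          deriv φ u = 2 * x * (x + T) / (a * T)) →
        (∀ u ∈ Set.Ioo (a / (x - T')) (a / (x - T + T')),
          deriv φ u = -(x * (x - T)) / (a * T)) →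
        (∀ u ∈ Set.Ioo (a / (2 * x + 2 * T)) (a / (2 * x + 2 * T - 2 * T')) ∪
            Set.Ioo (a / (2 * x + 2 * T')) (a / (2 * x)),
          0 ≤ deriv φ u ∧ deriv φ u ≤ 4 * x * (x + T) / (a * T)) →
        (∀ u ∈ Set.Ioo (a / x) (a / (x - T')) ∪ Set.Ioo (a / (x - T + T')) (a / (x - T)),
          -(2 * x * (x - T)) / (a * T) ≤ deriv φ u ∧ deriv φ u ≤ 0) →
        (∀ u, u ∉ Set.Icc (a / (2 * x + 2 * T)) (a / (2 * x)) ∪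
            Set.Icc (a / x) (a / (x - T)) → deriv φ u = 0) →
        ‖phiHatQuarterHalf φ -
            Complex.exp ((π : ℂ) * Complex.I / 4) *
              Complex.ofReal (2 * (Real.sqrt 2 - 1) * (x / a) ^ ((1 : ℝ) / 2))‖ ≤
          C * (x ^ (-δ) * (x / a) ^ ((1 : ℝ) / 2) + 1) ∧
        ‖phiHatQuarterThreeHalf φ -
            Complex.exp (3 * (π : ℂ) * Complex.I / 4) *
              Complex.ofReal ((1 - 1 / Real.sqrt 2) * (a / x) ^ ((1 : ℝ) / 2))‖ ≤
          C * (x ^ (-δ) * (a / x) ^ ((1 : ℝ) / 2) + 1) := by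
  intro δ hδ hδ2
  refine ⟨10, ?_⟩
  intro x a T T' φ hx hT _ ha has hφc hφ hφ1 hφ0 hφs _ _ _ _ _
  have h31 : (1 : ℝ) ≤ (3 : ℝ) ^ (1 / δ) :=
    Real.one_le_rpow (by norm_num) (by positivity)
  have hx0 : 0 < x := by linarith
  have ht3 : x ^ (-δ) ≤ 1 / 3 := by
    have h : (3 : ℝ) ≤ x ^ δ := by
      calc (3 : ℝ) = ((3 : ℝ) ^ (1 / δ)) ^ δ := by
            rw [← Real.rpow_mul (by norm_num)]
            rw [one_div_mul_cancel hδ.ne', Real.rpow_one]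
        _ ≤ x ^ δ := Real.rpow_le_rpow (by positivity) hx hδ.le
    rw [Real.rpow_neg hx0.le, one_div]
    exact inv_anti₀ (by norm_num) h
  have ht0 : 0 < x ^ (-δ) := Real.rpow_pos_of_pos hx0 _
  have hTt : T = x * x ^ (-δ) := by
    rw [hT, sub_eq_add_neg, Real.rpow_add hx0, Real.rpow_one]
  clear hT
  set t := x ^ (-δ) with ht
  clear_value t
  have hT0 : 0 < T := by rw [hTt]; positivity
  have hTx : T ≤ x / 3 := by rw [hTt]; nlinarith
  have hxT : 0 < x - T := by linarith
  obtain ⟨p, hp⟩ : ∃ p, p = a / (2 * x + 2 * T) := ⟨_, rfl⟩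
  obtain ⟨q, hq⟩ : ∃ q, q = a / (2 * x) := ⟨_, rfl⟩
  obtain ⟨r, hr⟩ : ∃ r, r = a / x := ⟨_, rfl⟩
  obtain ⟨s, hs⟩ : ∃ s, s = a / (x - T) := ⟨_, rfl⟩
  have hp0 : 0 < p := by rw [hp]; positivity
  have hpq : p ≤ q := by
    rw [hp, hq]; exact div_le_div_of_nonneg_left ha.le (by linarith) (by linarith)
  have hqr : q ≤ r := by
    rw [hq, hr]; exact div_le_div_of_nonneg_left ha.le (by linarith) (by linarith)
  have hrs : r ≤ s := by
    rw [hr, hs]; exact div_le_div_of_nonneg_left ha.le (by linarith) (by linarith)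
  have hs2 : s ≤ 2 := by rw [hs]; norm_num at has ⊢; linarith
  have hpi : p⁻¹ = x / a * (2 * (1 + t)) := by rw [hp, hTt, inv_div]; field_simp
  have hqi : q⁻¹ = x / a * 2 := by rw [hq, inv_div]; field_simp
  have hri : r⁻¹ = x / a := by rw [hr, inv_div]
  have hsi : s⁻¹ = x / a * (1 - t) := by rw [hs, hTt, inv_div]; field_simp
  rw [← hq, ← hr] at hφ1
  rw [← hp] at hφ0
  rw [← hs] at hφs
  rw [← hr]
  have hq0 : 0 < q := hp0.trans_le hpq
  have hr0 : 0 < r := hq0.trans_le hqr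
  have hcont := hφc.continuous
  have hxa : 0 ≤ x / a := by positivity
  rw [← Real.sqrt_eq_rpow, ← Real.sqrt_eq_rpow]
  have hB : 0 ≤ √(x / a) := Real.sqrt_nonneg _
  have hs2a : 1 ≤ √2 := by rw [Real.one_le_sqrt]; norm_num
  have hs2b : √2 ≤ 3 / 2 := by rw [Real.sqrt_le_left (by norm_num)]; norm_num
  constructor
  · unfold phiHatQuarterHalf
    rw [← mul_sub, ← Complex.ofReal_sub, norm_mul, Complex.norm_real,
      show (π : ℂ) * Complex.I / 4 = ((π / 4 : ℝ) : ℂ) * Complex.I by push_cast; ring,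
      Complex.norm_exp_ofReal_mul_I, one_mul, Real.norm_eq_abs,
      aux_restrict Real.cos φ p s hp0 (hpq.trans (hqr.trans hrs)) hφ0 hφs]
    have i1 := aux_int_s8 Real.cos φ Real.continuous_cos hcont p q hp0 hpq
    have i2 := aux_int_s8 Real.cos φ Real.continuous_cos hcont q r hq0 hqr
    have i3 := aux_int_s8 Real.cos φ Real.continuous_cos hcont r s hr0 hrs
    rw [← intervalIntegral.integral_add_adjacent_intervals (i1.trans i2) i3,
      ← intervalIntegral.integral_add_adjacent_intervals i1 i2]
    have b1 := aux_edge φ hφ p q hp0 hpq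
    have b2 := aux_mid φ q r hq0 hqr (hrs.trans hs2) hφ1
    have b3 := aux_edge φ hφ r s hr0 hrs
    rw [hpi, hqi, Real.sqrt_mul hxa, Real.sqrt_mul hxa, Real.sqrt_mul (by norm_num)] at b1
    rw [hqi, hri, Real.sqrt_mul hxa] at b2
    rw [hri, hsi, Real.sqrt_mul hxa] at b3
    have c1 : √(1 + t) ≤ 1 + t := by
      rw [Real.sqrt_le_left (by linarith)]; nlinarith
    have c2 : 1 - t ≤ √(1 - t) := by
      apply Real.le_sqrt_of_sq_le; nlinarith
    have d1 : 2 * (√(x / a) * (√2 * √(1 + t)) - √(x / a) * √2) ≤ 3 * (t * √(x / a)) := by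
      have : √2 * (√(1 + t) - 1) ≤ 3 / 2 * t := by
        calc √2 * (√(1 + t) - 1) ≤ √2 * t :=
              mul_le_mul_of_nonneg_left (by linarith) (by linarith)
          _ ≤ 3 / 2 * t := mul_le_mul_of_nonneg_right hs2b ht0.le
      have h := mul_le_mul_of_nonneg_left this hB
      linarith
    have d3 : 2 * (√(x / a) - √(x / a) * √(1 - t)) ≤ 2 * (t * √(x / a)) := by
      have h := mul_le_mul_of_nonneg_left c2 hB
      linarith
    have hn : 0 ≤ t * √(x / a) := by positivity
    rw [abs_le] at *
    constructor <;> linarith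
  · unfold phiHatQuarterThreeHalf
    rw [aux_restrict Real.sin φ p s hp0 (hpq.trans (hqr.trans hrs)) hφ0 hφs]
    have b := aux_sin φ hφ p s hp0 (hpq.trans (hqr.trans hrs))
    set I := ∫ u in p..s, Real.sin u * φ u * u ^ (-(3 : ℝ) / 2)
    have e : (1 / 2 : ℂ) * Complex.exp (3 * (π : ℂ) * Complex.I / 4) * Complex.ofReal I -
        Complex.exp (3 * (π : ℂ) * Complex.I / 4) *
          Complex.ofReal ((1 - 1 / √2) * √r) =
        Complex.exp (((3 * π / 4 : ℝ) : ℂ) * Complex.I) *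
          ((I / 2 - (1 - 1 / √2) * √r : ℝ) : ℂ) := by
      rw [show ((3 * π / 4 : ℝ) : ℂ) * Complex.I = 3 * (π : ℂ) * Complex.I / 4 by
        push_cast; ring]
      push_cast
      ring
    rw [e, norm_mul, Complex.norm_exp_ofReal_mul_I, one_mul, Complex.norm_real,
      Real.norm_eq_abs]
    have g1 : √s ≤ 2 := by rw [Real.sqrt_le_left (by norm_num)]; linarith
    have g2 : √r ≤ 2 := by rw [Real.sqrt_le_left (by norm_num)]; linarith
    have g3 : 0 ≤ √r := Real.sqrt_nonneg _
    have g4 : 0 ≤ √p := Real.sqrt_nonneg _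
    have g5 : 1 / √2 ≤ 1 := by rw [div_le_one (by positivity)]; exact hs2a
    have g6 : 0 ≤ 1 / √2 := by positivity
    have g7 : 0 ≤ (1 - 1 / √2) * √r := mul_nonneg (by linarith) g3
    have g8 : (1 - 1 / √2) * √r ≤ √r := by nlinarith
    have hn : 0 ≤ t * √r := by positivity
    rw [abs_le] at *
    constructor <;> linarith
end
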